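/- arXiv:math-ph/0612083 — 14 statements merged into one kernel-verified Lean document; each statement's English description precedes it below -/
import Mathlib

section
/- For every natural number n, 7 · t(n+1) · g(n) < 6 · t(n) · g(n+1); in particular the ratio t(n)/g(n) is strictly decreasing, decreasing at least by a factor 6/7 at each step. -/
/-- The ratio `t(n)/g(n)` is strictly decreasing, at least by a factor 6/7 each step:
`7 * t(n+1) * g(n) < 6 * t(n) * g(n+1)`. -/
theorem sg2_t_over_g_decreasing
    (t g h f : ℕ → ℕ)
    (ht0 : t 0 = 3) (hg0 : g 0 = 1) (hh0 : h 0 = 1)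
    (ht : ∀ n, t (n + 1) = 6 * t n ^ 2 * g n + 3 * t n * g n ^ 2)
    (hg : ∀ n, g (n + 1) = t n ^ 2 * h n + 2 * t n * g n * h n + 7 * t n * g n ^ 2
        + 4 * g n ^ 3 + g n ^ 2 * h n)
    (hh : ∀ n, h (n + 1) = 12 * t n * g n * h n + 14 * g n ^ 3 + 24 * g n ^ 2 * h n
        + 9 * g n * h n ^ 2 + 3 * t n * h n ^ 2 + h n ^ 3)
    (hf : ∀ n, f n = t n + 3 * g n + h n) :
    ∀ n, 7 * t (n + 1) * g n < 6 * t n * g (n + 1) := by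
  have pos : ∀ n, 0 < t n ∧ 0 < g n := by
    intro n
    induction n with
    | zero => simp [ht0, hg0]
    | succ k ih =>
      obtain ⟨h1, h2⟩ := ih
      rw [ht, hg]
      constructor <;> positivity
  intro n
  obtain ⟨h1, h2⟩ := pos n
  have key : 6 * t n * g (n + 1) = 7 * t (n + 1) * g n + (3 * t n * g n ^ 3
      + 6 * t n * (t n ^ 2 * h n + 2 * t n * g n * h n + g n ^ 2 * h n)) := by
    rw [ht, hg]; ring
  have : 0 < 3 * t n * g n ^ 3 := by positivity
  omega
end

section
/- For every natural number n ≥ 2, t(n) < g(n) < h(n). -/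
/-- For `n ≥ 2`, one has `t(n) < g(n) < h(n)`. -/
theorem sg2_t_lt_g_lt_h
    (t g h f : ℕ → ℕ)
    (ht0 : t 0 = 3) (hg0 : g 0 = 1) (hh0 : h 0 = 1)
    (ht : ∀ n, t (n + 1) = 6 * t n ^ 2 * g n + 3 * t n * g n ^ 2)
    (hg : ∀ n, g (n + 1) = t n ^ 2 * h n + 2 * t n * g n * h n + 7 * t n * g n ^ 2
        + 4 * g n ^ 3 + g n ^ 2 * h n)
    (hh : ∀ n, h (n + 1) = 12 * t n * g n * h n + 14 * g n ^ 3 + 24 * g n ^ 2 * h n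
        + 9 * g n * h n ^ 2 + 3 * t n * h n ^ 2 + h n ^ 3)
    (hf : ∀ n, f n = t n + 3 * g n + h n) :
    ∀ n, 2 ≤ n → t n < g n ∧ g n < h n := by
  intro n hn
  induction n, hn using Nat.le_induction with
  | base =>
    have a := ht 0
    have b := hg 0
    have c := hh 0
    rw [ht0, hg0] at a
    rw [ht0, hg0, hh0] at b c
    norm_num at a b c
    have a' := ht 1
    have b' := hg 1
    have c' := hh 1
    rw [a, b] at a'
    rw [a, b, c] at b' c'
    norm_num at a' b' c'
    rw [a', b', c']
    norm_num
  | succ n hn ih =>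
    obtain ⟨h1, h2⟩ := ih
    rw [ht n, hg n, hh n]
    generalize t n = x at *
    obtain ⟨p, hp⟩ := Nat.exists_eq_add_of_lt h1
    obtain ⟨q, hq⟩ := Nat.exists_eq_add_of_lt h2
    rw [hq, hp]
    constructor
    · zify
      rw [← sub_pos]
      ring_nf
      positivity
    · zify
      rw [← sub_pos]
      ring_nf
      positivity
end

section
/- For every natural number n ≥ 2, 4 · g(n+1) · h(n) < 3 · g(n) · h(n+1); in particular the ratio g(n)/h(n) decreases at least by a factor 3/4 at each step for n ≥ 2. -/
/-- For `n ≥ 2`, the ratio `g(n)/h(n)` decreases at least by a factor 3/4: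
`4 * g(n+1) * h(n) < 3 * g(n) * h(n+1)`. -/
theorem sg2_g_over_h_decreasing
    (t g h f : ℕ → ℕ)
    (ht0 : t 0 = 3) (hg0 : g 0 = 1) (hh0 : h 0 = 1)
    (ht : ∀ n, t (n + 1) = 6 * t n ^ 2 * g n + 3 * t n * g n ^ 2)
    (hg : ∀ n, g (n + 1) = t n ^ 2 * h n + 2 * t n * g n * h n + 7 * t n * g n ^ 2
        + 4 * g n ^ 3 + g n ^ 2 * h n)
    (hh : ∀ n, h (n + 1) = 12 * t n * g n * h n + 14 * g n ^ 3 + 24 * g n ^ 2 * h n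
        + 9 * g n * h n ^ 2 + 3 * t n * h n ^ 2 + h n ^ 3)
    (hf : ∀ n, f n = t n + 3 * g n + h n) :
    ∀ n, 2 ≤ n → 4 * g (n + 1) * h n < 3 * g n * h (n + 1) := by
  have hpos : ∀ n, 0 < g n ∧ 0 < h n := by
    intro n
    induction n with
    | zero => simp [hg0, hh0]
    | succ k ih =>
      obtain ⟨h1, h2⟩ := ih
      rw [hg, hh]
      constructor <;> positivity
  have hle : ∀ n, 2 ≤ n → t n ≤ g n := by
    intro n hn
    induction n, hn using Nat.le_induction with
    | base =>
      norm_num [ht 1, hg 1, ht 0, hg 0, hh 0, ht0, hg0, hh0]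
    | succ k hk ih =>
      rw [ht, hg]
      obtain ⟨d, hd⟩ := Nat.exists_eq_add_of_le ih
      rw [hd]
      generalize t k = a
      generalize h k = c
      have e : 0 ≤ a ^ 2 * c + 2 * a * (a + d) * c + (a + d) ^ 2 * c := Nat.zero_le _
      zify at *
      have e2 : (0:ℤ) ≤ 2 * a ^ 3 + 8 * a ^ 2 * d + 12 * a * d ^ 2 + 4 * d ^ 3 := by positivity
      nlinarith [(by positivity : (0:ℤ) ≤ a ^ 3), (by positivity : (0:ℤ) ≤ a ^ 2 * d),
        (by positivity : (0:ℤ) ≤ a * d ^ 2), (by positivity : (0:ℤ) ≤ d ^ 3)]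
  intro n hn
  obtain ⟨h1, h2⟩ := hpos n
  obtain ⟨d, hd⟩ := Nat.exists_eq_add_of_le (hle n hn)
  rw [hg, hh]
  have h3 : 0 < g n * h n ^ 3 := by positivity
  rw [hd] at h3 ⊢
  generalize t n = a at *
  generalize h n = c at *
  have p : ∀ x y z : ℕ, (0:ℤ) ≤ (a:ℤ) ^ x * d ^ y * c ^ z := fun x y z => by positivity
  zify at h3 ⊢
  linarith [p 3 0 1, p 2 1 1, p 1 2 1, p 0 3 1, p 2 0 2, p 1 1 2, p 0 2 2,
    p 1 0 3, p 0 1 3, p 4 0 0, p 3 1 0, p 2 2 0, p 1 3 0, p 0 4 0]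
end

section
/- The ratios t(n)/g(n) and g(n)/h(n) both tend to 0 as n → ∞. -/
open Filter

/-- The ratios `t(n)/g(n)` and `g(n)/h(n)` both tend to 0 as `n → ∞`. -/
theorem sg2_ratios_tendsto_zero
    (t g h f : ℕ → ℕ)
    (ht0 : t 0 = 3) (hg0 : g 0 = 1) (hh0 : h 0 = 1)
    (ht : ∀ n, t (n + 1) = 6 * t n ^ 2 * g n + 3 * t n * g n ^ 2)
    (hg : ∀ n, g (n + 1) = t n ^ 2 * h n + 2 * t n * g n * h n + 7 * t n * g n ^ 2
        + 4 * g n ^ 3 + g n ^ 2 * h n)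
    (hh : ∀ n, h (n + 1) = 12 * t n * g n * h n + 14 * g n ^ 3 + 24 * g n ^ 2 * h n
        + 9 * g n * h n ^ 2 + 3 * t n * h n ^ 2 + h n ^ 3)
    (hf : ∀ n, f n = t n + 3 * g n + h n) :
    Tendsto (fun n => (t n : ℝ) / (g n : ℝ)) atTop (nhds 0) ∧
    Tendsto (fun n => (g n : ℝ) / (h n : ℝ)) atTop (nhds 0) := by
  have key : ∀ n, 0 < g (n + 2) ∧ 0 < h (n + 2) ∧
      (t (n + 2) : ℝ) ≤ (4 / 5 : ℝ) ^ n * g (n + 2) ∧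
      5 * (g (n + 2) : ℝ) ≤ (4 / 5 : ℝ) ^ n * h (n + 2) := by
    intro n
    induction n with
    | zero =>
      have h1 : t 1 = 63 := by rw [ht, ht0, hg0]; norm_num
      have h2 : g 1 = 41 := by rw [hg, ht0, hg0, hh0]; norm_num
      have h3 : h 1 = 93 := by rw [hh, ht0, hg0, hh0]; norm_num
      rw [ht 1, hg 1, hh 1, h1, h2, h3]
      norm_num
    | succ n ih =>
      obtain ⟨pg, ph, h1, h2⟩ := ih
      have e1 := ht (n + 2)
      have e2 := hg (n + 2)
      have e3 := hh (n + 2)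
      rw [show n + 1 + 2 = n + 2 + 1 by ring]
      have qg : 0 < g (n + 2 + 1) := by rw [e2]; positivity
      have qh : 0 < h (n + 2 + 1) := by rw [e3]; positivity
      refine ⟨qg, qh, ?_⟩
      have e1' := congrArg (Nat.cast : ℕ → ℝ) e1
      have e2' := congrArg (Nat.cast : ℕ → ℝ) e2
      have e3' := congrArg (Nat.cast : ℕ → ℝ) e3
      push_cast at e1' e2' e3'
      have pG : (0 : ℝ) < g (n + 2) := by exact_mod_cast pg
      have pH : (0 : ℝ) < h (n + 2) := by exact_mod_cast ph
      have pT : (0 : ℝ) ≤ t (n + 2) := by positivity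
      have qG : (0 : ℝ) < g (n + 2 + 1) := by exact_mod_cast qg
      have qH : (0 : ℝ) < h (n + 2 + 1) := by exact_mod_cast qh
      generalize (t (n + 2) : ℝ) = T at *
      generalize (g (n + 2) : ℝ) = G at *
      generalize (h (n + 2) : ℝ) = H at *
      generalize (t (n + 2 + 1) : ℝ) = T' at *
      generalize (g (n + 2 + 1) : ℝ) = G' at *
      generalize (h (n + 2 + 1) : ℝ) = H' at *
      have c0 : (0 : ℝ) ≤ (4 / 5 : ℝ) ^ n := by positivity
      have c1 : (4 / 5 : ℝ) ^ n ≤ 1 := pow_le_one₀ (by norm_num) (by norm_num)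
      rw [pow_succ]
      generalize (4 / 5 : ℝ) ^ n = c at *
      have hTG : T ≤ G := by nlinarith
      have hGH : 5 * G ≤ H := by nlinarith
      constructor
      · have a1 : 5 * G * (T + G) ^ 2 ≤ G' := by
          have : 5 * G * (T + G) ^ 2 ≤ H * (T + G) ^ 2 := by gcongr
          have : 0 ≤ 7 * T * G ^ 2 + 4 * G ^ 3 := by positivity
          rw [e2']; linarith
        have a2 : 5 * T' * G ≤ 3 * T * G' := by
          have : 3 * T * (5 * G * (T + G) ^ 2) ≤ 3 * T * G' := by gcongr
          have : 0 ≤ T ^ 3 * G := by positivity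
          rw [e1']; linarith
        have a3 : T * G' ≤ c * G * G' := by gcongr
        have a4 : 0 ≤ c * G * G' := by positivity
        refine le_of_mul_le_mul_right ?_ pG
        linarith
      · have a1 : G' ≤ 4 * H * G ^ 2 + 11 * G ^ 3 := by
          have b1 : H * (T + G) ^ 2 ≤ H * (G + G) ^ 2 := by gcongr
          have b2 : 7 * T * G ^ 2 ≤ 7 * G * G ^ 2 := by gcongr
          rw [e2']; linarith
        have a2 : 5 * G' * H ≤ 4 * G * H' := by
          have b0 : 5 * G' * H ≤ 5 * (4 * H * G ^ 2 + 11 * G ^ 3) * H := by gcongr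
          have b1 : (5 * G) * (G * H ^ 2) ≤ H * (G * H ^ 2) := by gcongr
          have b2 : (5 * G) * (G ^ 2 * H) ≤ H * (G ^ 2 * H) := by gcongr
          have b3 : 0 ≤ G * (12 * T * G * H + 14 * G ^ 3 + 24 * G ^ 2 * H + 3 * T * H ^ 2) := by
            positivity
          have b4 : 0 ≤ G ^ 2 * H ^ 2 := by positivity
          rw [e3']; linarith
        have a3 : 5 * G * H' ≤ c * H * H' := by gcongr
        refine le_of_mul_le_mul_right ?_ pH
        linarith
  have lim : Tendsto (fun n : ℕ => (4 / 5 : ℝ) ^ n) atTop (nhds 0) :=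
    tendsto_pow_atTop_nhds_zero_of_lt_one (by norm_num) (by norm_num)
  constructor
  · rw [← tendsto_add_atTop_iff_nat 2]
    refine squeeze_zero (fun n => by positivity) (fun n => ?_) lim
    obtain ⟨pg, ph, h1, h2⟩ := key n
    have pG : (0 : ℝ) < g (n + 2) := by exact_mod_cast pg
    exact (div_le_iff₀ pG).2 h1
  · rw [← tendsto_add_atTop_iff_nat 2]
    refine squeeze_zero (fun n => by positivity) (fun n => ?_) lim
    obtain ⟨pg, ph, h1, h2⟩ := key n
    have pG : (0 : ℝ) < g (n + 2) := by exact_mod_cast pg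
    have pH : (0 : ℝ) < h (n + 2) := by exact_mod_cast ph
    exact (div_le_iff₀ pH).2 (by linarith)
end

section
/- For every natural number n ≥ 1, h(n-1)^3 < h(n) < f(n) < f(n-1)^3; consequently for all integers 1 ≤ m ≤ n, h(m)^(3^(n-m)) ≤ h(n) < f(n) ≤ f(m)^(3^(n-m)). -/
/-- For `n ≥ 1`, `h(n-1)^3 < h(n) < f(n) < f(n-1)^3`; consequently for `1 ≤ m ≤ n`,
`h(m)^(3^(n-m)) ≤ h(n) < f(n) ≤ f(m)^(3^(n-m))`. -/
theorem sg2_bounds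
    (t g h f : ℕ → ℕ)
    (ht0 : t 0 = 3) (hg0 : g 0 = 1) (hh0 : h 0 = 1)
    (ht : ∀ n, t (n + 1) = 6 * t n ^ 2 * g n + 3 * t n * g n ^ 2)
    (hg : ∀ n, g (n + 1) = t n ^ 2 * h n + 2 * t n * g n * h n + 7 * t n * g n ^ 2
        + 4 * g n ^ 3 + g n ^ 2 * h n)
    (hh : ∀ n, h (n + 1) = 12 * t n * g n * h n + 14 * g n ^ 3 + 24 * g n ^ 2 * h n
        + 9 * g n * h n ^ 2 + 3 * t n * h n ^ 2 + h n ^ 3)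
    (hf : ∀ n, f n = t n + 3 * g n + h n) :
    (∀ n, 1 ≤ n → h (n - 1) ^ 3 < h n ∧ h n < f n ∧ f n < f (n - 1) ^ 3) ∧
    (∀ m n, 1 ≤ m → m ≤ n →
      h m ^ 3 ^ (n - m) ≤ h n ∧ h n < f n ∧ f n ≤ f m ^ 3 ^ (n - m)) := by
  have pos : ∀ n, 0 < t n ∧ 0 < g n ∧ 0 < h n := by
    intro n
    induction n with
    | zero => simp [ht0, hg0, hh0]
    | succ k ih =>
      obtain ⟨h1, h2, h3⟩ := ih
      rw [ht, hg, hh]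
      refine ⟨by positivity, by positivity, by positivity⟩
  have low : ∀ n, h n ^ 3 < h (n + 1) := by
    intro n
    obtain ⟨h1, h2, h3⟩ := pos n
    have : 0 < 14 * g n ^ 3 := by positivity
    rw [hh]
    have : 0 ≤ 12 * t n * g n * h n + 24 * g n ^ 2 * h n
        + 9 * g n * h n ^ 2 + 3 * t n * h n ^ 2 := Nat.zero_le _
    linarith
  have mid : ∀ n, h n < f n := by
    intro n
    obtain ⟨h1, h2, h3⟩ := pos n
    rw [hf]
    omega
  have up : ∀ n, f (n + 1) < f n ^ 3 := by
    intro n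
    obtain ⟨h1, h2, h3⟩ := pos n
    have key : f n ^ 3 = f (n + 1)
        + (t n ^ 3 + g n ^ 3 + 3 * t n ^ 2 * g n + 3 * t n * g n ^ 2) := by
      rw [hf n, hf (n + 1), ht, hg, hh]
      ring
    have : 0 < t n ^ 3 + g n ^ 3 + 3 * t n ^ 2 * g n + 3 * t n * g n ^ 2 := by positivity
    omega
  refine ⟨?_, ?_⟩
  · intro n hn
    obtain ⟨k, rfl⟩ := Nat.exists_eq_add_of_le' hn
    exact ⟨low k, mid _, up k⟩
  · intro m n _ hmn
    obtain ⟨k, rfl⟩ := Nat.exists_eq_add_of_le hmn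
    rw [Nat.add_sub_cancel_left]
    refine ⟨?_, mid _, ?_⟩
    · clear hmn
      induction k with
      | zero => simp
      | succ k ih =>
        rw [pow_succ 3 k, pow_mul]
        exact (Nat.pow_le_pow_left ih 3).trans (low (m + k)).le
    · clear hmn
      induction k with
      | zero => simp
      | succ k ih =>
        rw [pow_succ 3 k, pow_mul]
        exact (up (m + k)).le.trans (Nat.pow_le_pow_left ih 3)
end

section
/- The limit z := lim_{n→∞} (2 ln f(n)) / (3 (3^n + 1)) exists, and for every integer m ≥ 1 it satisfies the strict bounds (2/3^(m+1)) · ln h(m) < z < (2/3^(m+1)) · ln f(m). -/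
open Filter

/-- The asymptotic growth constant `z = lim 2 ln f(n) / (3 (3^n + 1))` exists and satisfies
`(2/3^(m+1)) ln h(m) < z < (2/3^(m+1)) ln f(m)` for every `m ≥ 1`. -/
theorem sg2_growth_constant_bounds
    (t g h f : ℕ → ℕ)
    (ht0 : t 0 = 3) (hg0 : g 0 = 1) (hh0 : h 0 = 1)
    (ht : ∀ n, t (n + 1) = 6 * t n ^ 2 * g n + 3 * t n * g n ^ 2)
    (hg : ∀ n, g (n + 1) = t n ^ 2 * h n + 2 * t n * g n * h n + 7 * t n * g n ^ 2
        + 4 * g n ^ 3 + g n ^ 2 * h n)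
    (hh : ∀ n, h (n + 1) = 12 * t n * g n * h n + 14 * g n ^ 3 + 24 * g n ^ 2 * h n
        + 9 * g n * h n ^ 2 + 3 * t n * h n ^ 2 + h n ^ 3)
    (hf : ∀ n, f n = t n + 3 * g n + h n) :
    ∃ z : ℝ,
      Tendsto (fun n : ℕ => 2 * Real.log (f n) / (3 * ((3 : ℝ) ^ n + 1))) atTop (nhds z) ∧
      ∀ m : ℕ, 1 ≤ m →
        2 / (3 : ℝ) ^ (m + 1) * Real.log (h m) < z ∧
        z < 2 / (3 : ℝ) ^ (m + 1) * Real.log (f m) := by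
  have hpos : ∀ n, 0 < t n ∧ 0 < g n ∧ 0 < h n := by
    intro n
    induction n with
    | zero => simp [ht0, hg0, hh0]
    | succ k ih =>
      obtain ⟨h1, h2, h3⟩ := ih
      rw [ht, hg, hh]
      refine ⟨by positivity, by positivity, by positivity⟩
  have hh3 : ∀ n, h n ^ 3 < h (n + 1) := by
    intro n
    obtain ⟨h1, h2, h3⟩ := hpos n
    rw [hh]
    have : 0 < 14 * g n ^ 3 := by positivity
    have := Nat.zero_le (12 * t n * g n * h n + 24 * g n ^ 2 * h n
        + 9 * g n * h n ^ 2 + 3 * t n * h n ^ 2)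
    linarith
  have hf3 : ∀ n, f (n + 1) < f n ^ 3 := by
    intro n
    obtain ⟨h1, h2, h3⟩ := hpos n
    rw [hf, hf, ht, hg, hh]
    have e : (t n + 3 * g n + h n) ^ 3 = (6 * t n ^ 2 * g n + 3 * t n * g n ^ 2)
      + 3 * (t n ^ 2 * h n + 2 * t n * g n * h n + 7 * t n * g n ^ 2
        + 4 * g n ^ 3 + g n ^ 2 * h n) + (12 * t n * g n * h n + 14 * g n ^ 3 + 24 * g n ^ 2 * h n
        + 9 * g n * h n ^ 2 + 3 * t n * h n ^ 2 + h n ^ 3)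
      + (t n ^ 3 + 3 * t n ^ 2 * g n + 3 * t n * g n ^ 2 + g n ^ 3) := by ring
    rw [e]
    have : 0 < t n ^ 3 + 3 * t n ^ 2 * g n + 3 * t n * g n ^ 2 + g n ^ 3 := by positivity
    omega
  have hhf : ∀ n, h n ≤ f n := fun n => by rw [hf]; omega
  have hfpos : ∀ n, 0 < f n := fun n => (hpos n).2.2.trans_le (hhf n)
  set a : ℕ → ℝ := fun n => Real.log (h n) / 3 ^ n with ha
  set b : ℕ → ℝ := fun n => Real.log (f n) / 3 ^ n with hb
  have hamono : StrictMono a := by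
    refine strictMono_nat_of_lt_succ fun n => ?_
    have h3 : (0 : ℝ) < h n := by exact_mod_cast (hpos n).2.2
    have hl : 3 * Real.log (h n) < Real.log (h (n + 1)) := by
      have := Real.log_lt_log (pow_pos h3 3) (by exact_mod_cast hh3 n : (h n : ℝ) ^ 3 < h (n + 1))
      rw [Real.log_pow] at this
      exact_mod_cast this
    simp only [ha]
    rw [div_lt_div_iff₀ (by positivity) (by positivity), pow_succ]
    have := mul_lt_mul_of_pos_right hl (by positivity : (0 : ℝ) < 3 ^ n)
    linarith
  have hbanti : StrictAnti b := by
    refine strictAnti_nat_of_succ_lt fun n => ?_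
    have h3 : (0 : ℝ) < f (n + 1) := by exact_mod_cast hfpos (n + 1)
    have hl : Real.log (f (n + 1)) < 3 * Real.log (f n) := by
      have := Real.log_lt_log h3 (by exact_mod_cast hf3 n : (f (n + 1) : ℝ) < f n ^ 3)
      rw [Real.log_pow] at this
      exact_mod_cast this
    simp only [hb]
    rw [div_lt_div_iff₀ (by positivity) (by positivity), pow_succ]
    have := mul_lt_mul_of_pos_right hl (by positivity : (0 : ℝ) < 3 ^ n)
    linarith
  have hab : ∀ n, a n ≤ b n := by
    intro n
    have h3 : (0 : ℝ) < h n := by exact_mod_cast (hpos n).2.2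
    have := Real.log_le_log h3 (by exact_mod_cast hhf n : (h n : ℝ) ≤ f n)
    simp only [ha, hb]
    gcongr
  have hab' : ∀ m n, a m ≤ b n := fun m n =>
    (hamono.monotone (le_max_left m n)).trans
      ((hab _).trans (hbanti.antitone (le_max_right m n)))
  have hbdd : BddBelow (Set.range b) := ⟨a 0, by rintro _ ⟨n, rfl⟩; exact hab' 0 n⟩
  have hlim : Tendsto b atTop (nhds (⨅ n, b n)) := tendsto_atTop_ciInf hbanti.antitone hbdd
  set L := ⨅ n, b n with hL
  have hLb : ∀ n, L < b n := fun n =>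
    (ciInf_le hbdd (n + 1)).trans_lt (hbanti (Nat.lt_succ_self n))
  have haL : ∀ n, a n < L := fun n =>
    (hamono (Nat.lt_succ_self n)).trans_le (le_ciInf fun k => hab' (n + 1) k)
  refine ⟨2 / 3 * L, ?_, ?_⟩
  · have hp : Tendsto (fun n : ℕ => ((1 / 3 : ℝ)) ^ n) atTop (nhds 0) :=
      tendsto_pow_atTop_nhds_zero_of_lt_one (by norm_num) (by norm_num)
    have h1 := (hlim.const_mul (2 / 3)).div (hp.const_add 1) (by norm_num)
    have e0 : 2 / 3 * L / (1 + 0) = 2 / 3 * L := by ring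
    rw [e0] at h1
    refine h1.congr fun n => ?_
    simp only [hb, Pi.div_apply, one_div, inv_pow]
    have : (0 : ℝ) < 3 ^ n := by positivity
    field_simp
  · intro m _
    have e : ∀ x : ℝ, 2 / (3 : ℝ) ^ (m + 1) * x = 2 / 3 * (x / 3 ^ m) := by
      intro x
      rw [pow_succ]
      field_simp
    rw [e, e]
    have h1 := haL m
    have h2 := hLb m
    simp only [ha] at h1
    simp only [hb] at h2
    constructor <;> linarith
end

section
/- The asymptotic growth constant z := lim_{n→∞} (2 ln f(n)) / (3 (3^n + 1)) satisfies 1.24733719931 < z < 1.24733719932. -/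
open Filter

set_option exponentiation.threshold 5000

/-- The asymptotic growth constant `z_{SG_2} = lim 2 ln f(n) / (3 (3^n + 1))` satisfies
`1.24733719931 < z < 1.24733719932`. -/
theorem sg2_growth_constant_value
    (t g h f : ℕ → ℕ)
    (ht0 : t 0 = 3) (hg0 : g 0 = 1) (hh0 : h 0 = 1)
    (ht : ∀ n, t (n + 1) = 6 * t n ^ 2 * g n + 3 * t n * g n ^ 2)
    (hg : ∀ n, g (n + 1) = t n ^ 2 * h n + 2 * t n * g n * h n + 7 * t n * g n ^ 2
        + 4 * g n ^ 3 + g n ^ 2 * h n)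
    (hh : ∀ n, h (n + 1) = 12 * t n * g n * h n + 14 * g n ^ 3 + 24 * g n ^ 2 * h n
        + 9 * g n * h n ^ 2 + 3 * t n * h n ^ 2 + h n ^ 3)
    (hf : ∀ n, f n = t n + 3 * g n + h n) :
    ∃ z : ℝ,
      Tendsto (fun n : ℕ => 2 * Real.log (f n) / (3 * ((3 : ℝ) ^ n + 1))) atTop (nhds z) ∧
      1.24733719931 < z ∧ z < 1.24733719932 := by
  have t1 : t 1 = 63 := by rw [ht 0, ht0, hg0]; norm_num
  have g1 : g 1 = 41 := by rw [hg 0, ht0, hg0, hh0]; norm_num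
  have h1 : h 1 = 93 := by rw [hh 0, ht0, hg0, hh0]; norm_num
  have t2 : t 2 = 1294083 := by
    rw [ht 1, t1, g1]; norm_num
  have g2 : g 2 = 2022893 := by
    rw [hg 1, t1, g1, h1]; norm_num
  have h2 : h 2 = 13230013 := by
    rw [hh 1, t1, g1, h1]; norm_num
  have t3 : t 3 = 36212372367917382063 := by
    rw [ht 2, t2, g2]; norm_num
  have g3 : g 3 = 215741040104979715185 := by
    rw [hg 2, t2, g2, h2]; norm_num
  have h3 : h 3 = 8012691266099095194581 := by
    rw [hh 2, t2, g2, h2]; norm_num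
  have t4 : t 4 = 6753881155395148881201426976445689795306086050248316402204115 := by
    rw [ht 3, t3, g3]; norm_num
  have g4 : g 4 = 560614128405294924967963949426699864403889049807377599334701549 := by
    rw [hg 3, t3, g3, h3]; norm_num
  have h4 : h 4 = 655919304210118002541330687585664958624488147511374557764105420845 := by
    rw [hh 3, t3, g3, h3]; norm_num
  have t5 : t 5 = 6521429653930618644419282836842499286297343079550630547705918352100704377325776626711674902947710869145613156767225935595774900697288540537712592654278044842823246061600708440347760598495 := by
    rw [ht 4, t4, g4]; norm_num
  have g5 : g 5 = 211864296410596547224223086594134526691309325089221051269479922730514979588987073674635041176918197450159410727791876767349699653246370012014325711240272942003735796475912908218190811384911521 := by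
    rw [hg 4, t4, g4, h4]; norm_num
  have h5 : h 5 = 284380684710155579842508894598511452937244207244035070232639124014013754570114464131609318807933794265665528127006222619895359977032837671598005469838881635553932965572295912763696932655904990883541 := by
    rw [hh 4, t4, g4, h4]; norm_num
  have g6 : g 6 = 12765671830504136871221011055770599161201681080178421540862179546400842969715594023144589554929788646112958438125917521962514020058923752939507012131800757504150207853070121526482428420033156804947801587300172757957556186033379994939055582112748710881016592468650585944775062050557216409084499144879995514386312184200187217652402636112310979839903750908936472762774366625179107656343350976619295108295775791735116865805252447992670502376656006187106932762182927506690679345192635401756855490473021657490849221453513766141018112813530737257537397563576459807012030177682231596400605 := by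
    rw [hg 5, t5, g5, h5]; norm_num
  have h6 : h 6 = 22998695253284846435330452594348030428145370797793707285777118847419824158153082481001370215577079851727026181902009986834719637043736644243030687355198313666362285446840579338846094562511434156045157874325350902112481342973288433724215985360199120706988881245195358959366629163173850442055909476503748941779343084701796811575767607305738553629711051542996518436942157285617725906225590591325576764973664805706590114103123362806346468713978881823651015247888866668859493148444010283057641757735834576269152719179799208568554176666724254853808218013162172824851122772806042068829024274880651853 := by
    rw [hh 5, t5, g5, h5]; norm_num
  have he := Real.exp_one_near_20
  rw [abs_le] at he
  have hup : 2 * Real.log (f 4) / 3 ^ 5 < 1.24733719932 := by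
    have : Real.log (f 4) < (7577573485869/50000000000 : ℝ) := by
      rw [hf 4, t4, g4, h4, Real.log_lt_iff_lt_exp (by norm_num)]
      have e1 : (363916618873/133877442384 - 1/10^20 : ℝ) ^ 151 ≤ Real.exp 151 := by
        rw [show Real.exp 151 = Real.exp 1 ^ 151 by rw [Real.exp_one_pow]; norm_num]
        exact pow_le_pow_left₀ (by norm_num) (by linarith [he.1]) _
      have e2 := Real.sum_le_exp_of_nonneg (x := (27573485869/50000000000 : ℝ)) (by norm_num) 18
      have e3 : Real.exp (7577573485869/50000000000 : ℝ) = Real.exp 151 * Real.exp (27573485869/50000000000 : ℝ) := by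
        rw [← Real.exp_add]; norm_num
      rw [e3]
      refine lt_of_lt_of_le ?_ (mul_le_mul e1 e2 (Finset.sum_nonneg fun i _ => by positivity) (Real.exp_pos _).le)
      norm_num [Finset.sum_range_succ, Nat.factorial]
    norm_num at this ⊢
    linarith
  have hlo : 1.24733719931 < 2 * Real.log ((h 6 + 2 * g 6 : ℕ) : ℝ) / 3 ^ 7 := by
    have : (272792645489097/200000000000 : ℝ) < Real.log ((h 6 + 2 * g 6 : ℕ) : ℝ) := by
      rw [g6, h6, Real.lt_log_iff_exp_lt (by norm_num)]
      have e1 : Real.exp 1363 ≤ (363916618873/133877442384 + 1/10^20 : ℝ) ^ 1363 := by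
        rw [show Real.exp 1363 = Real.exp 1 ^ 1363 by rw [Real.exp_one_pow]; norm_num]
        exact pow_le_pow_left₀ (Real.exp_pos _).le (by linarith [he.2]) _
      have e2 := Real.exp_bound' (x := (192645489097/200000000000 : ℝ)) (by norm_num) (by norm_num) (n := 18) (by norm_num)
      have e3 : Real.exp (272792645489097/200000000000 : ℝ) = Real.exp 1363 * Real.exp (192645489097/200000000000 : ℝ) := by
        rw [← Real.exp_add]; norm_num
      rw [e3]
      refine lt_of_le_of_lt (mul_le_mul e1 e2 (Real.exp_pos _).le (by positivity)) ?_
      norm_num [Finset.sum_range_succ, Nat.factorial]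
    norm_num at this ⊢
    linarith
  clear t1 g1 h1 t2 g2 h2 t3 g3 h3 t4 g4 h4 t5 g5 h5 g6 h6
  have hpos : ∀ n, 0 < h n := by
    intro n
    induction n with
    | zero => omega
    | succ n ih => rw [hh]; positivity
  have hfs : ∀ n, f (n + 1) ≤ f n ^ 3 := by
    intro n
    have : f n ^ 3 = f (n + 1) + (t n + g n) ^ 3 := by
      rw [hf, hf, ht, hg, hh]; ring
    omega
  have hus : ∀ n, (h n + 2 * g n) ^ 3 ≤ h (n + 1) + 2 * g (n + 1) := by
    intro n
    have : h (n + 1) + 2 * g (n + 1) = (h n + 2 * g n) ^ 3 + (2 * t n ^ 2 * h n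
        + 16 * t n * g n * h n + 14 * t n * g n ^ 2 + 14 * g n ^ 3 + 14 * g n ^ 2 * h n
        + 3 * g n * h n ^ 2 + 3 * t n * h n ^ 2) := by
      rw [hg, hh]; ring
    omega
  set a : ℕ → ℝ := fun n => Real.log (f n) / 3 ^ n with ha
  set b : ℕ → ℝ := fun n => Real.log ((h n + 2 * g n : ℕ) : ℝ) / 3 ^ n with hb
  have hfp : ∀ n, 0 < f n := fun n => by rw [hf]; have := hpos n; omega
  have hup' : ∀ n, 0 < h n + 2 * g n := fun n => by have := hpos n; omega
  have haa : Antitone a := by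
    refine antitone_nat_of_succ_le fun n => ?_
    have h1 : Real.log (f (n + 1)) ≤ 3 * Real.log (f n) := by
      have : Real.log (f (n + 1)) ≤ Real.log ((f n : ℝ) ^ 3) :=
        Real.log_le_log (by exact_mod_cast hfp (n + 1)) (by exact_mod_cast hfs n)
      rwa [Real.log_pow] at this
    simp only [ha]
    rw [div_le_div_iff₀ (by positivity) (by positivity), pow_succ]
    nlinarith [pow_pos (show (0 : ℝ) < 3 by norm_num) n]
  have hbm : Monotone b := by
    refine monotone_nat_of_le_succ fun n => ?_
    have h1 : 3 * Real.log ((h n + 2 * g n : ℕ) : ℝ)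
        ≤ Real.log ((h (n + 1) + 2 * g (n + 1) : ℕ) : ℝ) := by
      have : Real.log (((h n + 2 * g n : ℕ) : ℝ) ^ 3)
          ≤ Real.log ((h (n + 1) + 2 * g (n + 1) : ℕ) : ℝ) :=
        Real.log_le_log (pow_pos (by exact_mod_cast hup' n) 3) (by exact_mod_cast hus n)
      rwa [Real.log_pow] at this
    simp only [hb]
    rw [div_le_div_iff₀ (by positivity) (by positivity), pow_succ]
    nlinarith [pow_pos (show (0 : ℝ) < 3 by norm_num) n]
  have hba : ∀ n, b n ≤ a n := by
    intro n
    simp only [ha, hb]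
    refine div_le_div_of_nonneg_right ?_ (by positivity)
    refine Real.log_le_log (by exact_mod_cast hup' n) ?_
    have : h n + 2 * g n ≤ f n := by rw [hf]; omega
    exact_mod_cast this
  have hb6 : ∀ n, b 6 ≤ a n := fun n =>
    (hbm (le_max_left 6 n)).trans ((hba _).trans (haa (le_max_right 6 n)))
  have hbdd : BddBelow (Set.range a) := ⟨b 6, by rintro _ ⟨n, rfl⟩; exact hb6 n⟩
  have hlim := tendsto_atTop_ciInf haa hbdd
  have hL1 : b 6 ≤ ⨅ n, a n := le_ciInf hb6
  have hL2 : ⨅ n, a n ≤ a 4 := ciInf_le hbdd 4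
  refine ⟨2 / 3 * (⨅ n, a n), ?_, ?_, ?_⟩
  · have h3 : Tendsto (fun n : ℕ => (1 / 3 : ℝ) ^ n) atTop (nhds 0) :=
      tendsto_pow_atTop_nhds_zero_of_lt_one (by norm_num) (by norm_num)
    have h4 : Tendsto (fun n : ℕ => 2 / 3 * a n / (1 + (1 / 3 : ℝ) ^ n)) atTop
        (nhds (2 / 3 * (⨅ n, a n) / (1 + 0))) :=
      (hlim.const_mul _).div (h3.const_add 1) (by norm_num)
    rw [add_zero, div_one] at h4
    refine h4.congr fun n => ?_
    simp only [ha, one_div, inv_pow]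
    have : (0 : ℝ) < 3 ^ n := by positivity
    field_simp
  · refine lt_of_lt_of_le hlo ?_
    have : 2 * Real.log ((h 6 + 2 * g 6 : ℕ) : ℝ) / 3 ^ 7 = 2 / 3 * b 6 := by
      simp only [hb]; ring
    rw [this]; linarith
  · refine lt_of_le_of_lt ?_ hup
    have : 2 * Real.log (f 4) / 3 ^ 5 = 2 / 3 * a 4 := by
      simp only [ha]; ring
    rw [this]; linarith
end

section
/- The sequence (t(n) + g(n)) / f(n) of real numbers is strictly decreasing in n, and 0 ≤ (t(n) + g(n)) / f(n) < 1 for all n. -/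
/-- The real sequence `(t(n) + g(n)) / f(n)` is strictly decreasing and lies in `[0, 1)`. -/
theorem sg2_alpha_beta_decreasing
    (t g h f : ℕ → ℕ)
    (ht0 : t 0 = 3) (hg0 : g 0 = 1) (hh0 : h 0 = 1)
    (ht : ∀ n, t (n + 1) = 6 * t n ^ 2 * g n + 3 * t n * g n ^ 2)
    (hg : ∀ n, g (n + 1) = t n ^ 2 * h n + 2 * t n * g n * h n + 7 * t n * g n ^ 2
        + 4 * g n ^ 3 + g n ^ 2 * h n)
    (hh : ∀ n, h (n + 1) = 12 * t n * g n * h n + 14 * g n ^ 3 + 24 * g n ^ 2 * h n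
        + 9 * g n * h n ^ 2 + 3 * t n * h n ^ 2 + h n ^ 3)
    (hf : ∀ n, f n = t n + 3 * g n + h n) :
    StrictAnti (fun n : ℕ => ((t n : ℝ) + (g n : ℝ)) / (f n : ℝ)) ∧
    ∀ n, 0 ≤ ((t n : ℝ) + (g n : ℝ)) / (f n : ℝ) ∧
      ((t n : ℝ) + (g n : ℝ)) / (f n : ℝ) < 1 := by
  have hpos : ∀ n, 0 < t n ∧ 0 < g n ∧ 0 < h n := by
    intro n
    induction n with
    | zero => simp [ht0, hg0, hh0]
    | succ n ih =>
      obtain ⟨h1, h2, h3⟩ := ih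
      rw [ht, hg, hh]
      refine ⟨by positivity, by positivity, by positivity⟩
  have hposR : ∀ n, (0 : ℝ) < t n ∧ (0 : ℝ) < g n ∧ (0 : ℝ) < h n := by
    intro n
    obtain ⟨h1, h2, h3⟩ := hpos n
    exact ⟨by exact_mod_cast h1, by exact_mod_cast h2, by exact_mod_cast h3⟩
  refine ⟨strictAnti_nat_of_succ_lt fun n => ?_, fun n => ?_⟩
  · have hp := hposR n
    have hq := hposR (n + 1)
    simp only [hf]
    push_cast
    obtain ⟨h1, h2, h3⟩ := hp
    obtain ⟨h4, h5, h6⟩ := hq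
    rw [div_lt_div_iff₀ (by positivity) (by positivity)]
    rw [ht, hg, hh]
    push_cast
    generalize (t n : ℝ) = a at *
    generalize (g n : ℝ) = b at *
    generalize (h n : ℝ) = c at *
    rw [← sub_pos]
    have key : 0 < 2*a^3*c + 10*a^2*b*c + 2*a^2*b^2 + 16*a*b^3 + 14*b^4 + 28*a*b^2*c
        + 20*b^3*c + 10*a*b*c^2 + 8*b^2*c^2 + 2*a^2*c^2 + a*c^3 + b*c^3 := by positivity
    refine key.trans_eq ?_
    ring
  · obtain ⟨h1, h2, h3⟩ := hposR n
    refine ⟨by positivity, ?_⟩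
    rw [hf]
    push_cast
    rw [div_lt_one (by positivity)]
    linarith
end

section
/- Let z := lim_{n→∞} (2 ln f(n)) / (3 (3^n + 1)). For every integer m ≥ 1, (2/3^(m+1)) · ln f(m) − z ≤ −(1/3^(m+1)) · ln(1 − ((t(m) + g(m)) / f(m))^3). -/
open Filter

/-- The difference between the upper bound `(2/3^(m+1)) ln f(m)` and the growth constant `z`
is at most `-(1/3^(m+1)) ln (1 - ((t(m)+g(m))/f(m))^3)`. -/
theorem sg2_upper_bound_gap
    (t g h f : ℕ → ℕ)
    (ht0 : t 0 = 3) (hg0 : g 0 = 1) (hh0 : h 0 = 1)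
    (ht : ∀ n, t (n + 1) = 6 * t n ^ 2 * g n + 3 * t n * g n ^ 2)
    (hg : ∀ n, g (n + 1) = t n ^ 2 * h n + 2 * t n * g n * h n + 7 * t n * g n ^ 2
        + 4 * g n ^ 3 + g n ^ 2 * h n)
    (hh : ∀ n, h (n + 1) = 12 * t n * g n * h n + 14 * g n ^ 3 + 24 * g n ^ 2 * h n
        + 9 * g n * h n ^ 2 + 3 * t n * h n ^ 2 + h n ^ 3)
    (hf : ∀ n, f n = t n + 3 * g n + h n)
    (z : ℝ)
    (hz : Tendsto (fun n : ℕ => 2 * Real.log (f n) / (3 * ((3 : ℝ) ^ n + 1))) atTop (nhds z)) :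
    ∀ m : ℕ, 1 ≤ m →
      2 / (3 : ℝ) ^ (m + 1) * Real.log (f m) - z ≤
        -(1 / (3 : ℝ) ^ (m + 1)) *
          Real.log (1 - (((t m : ℝ) + (g m : ℝ)) / (f m : ℝ)) ^ 3) := by
  have hpos : ∀ n, 0 < t n ∧ 0 < g n ∧ 0 < h n := by
    intro n
    induction n with
    | zero => omega
    | succ k ih =>
      obtain ⟨h1, h2, h3⟩ := ih
      rw [ht, hg, hh]
      refine ⟨?_, ?_, ?_⟩ <;> positivity
  have hfR : ∀ n, (f n : ℝ) = t n + 3 * g n + h n := by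
    intro n
    rw [hf]
    push_cast
    ring
  have hfpos : ∀ n, (0 : ℝ) < f n := by
    intro n
    obtain ⟨h1, h2, h3⟩ := hpos n
    rw [hfR]
    positivity
  have hrec : ∀ n, (f (n + 1) : ℝ) = (f n : ℝ) ^ 3 - ((t n : ℝ) + g n) ^ 3 := by
    intro n
    rw [hfR, hfR, ht, hg, hh]
    push_cast
    ring
  set r : ℕ → ℝ := fun n => ((t n : ℝ) + (g n : ℝ)) / (f n : ℝ) with hr
  have hr0 : ∀ n, 0 ≤ r n := fun n => by
    simp only [hr]
    positivity
  have hr1 : ∀ n, r n < 1 := by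
    intro n
    obtain ⟨h1, h2, h3⟩ := hpos n
    simp only [hr]
    rw [div_lt_one (hfpos n), hfR]
    have h2' : (0 : ℝ) < g n := by exact_mod_cast h2
    have h3' : (0 : ℝ) < h n := by exact_mod_cast h3
    linarith
  have hr3 : ∀ n, 0 < 1 - r n ^ 3 := by
    intro n
    have := pow_lt_one₀ (hr0 n) (hr1 n) (n := 3) (by norm_num)
    linarith
  have hanti : Antitone r := by
    apply antitone_nat_of_succ_le
    intro n
    simp only [hr]
    rw [div_le_div_iff₀ (hfpos _) (hfpos _), hrec, hfR, ht, hg]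
    push_cast
    have h1 : (0 : ℝ) ≤ t n := Nat.cast_nonneg _
    have h2 : (0 : ℝ) ≤ g n := Nat.cast_nonneg _
    have h3 : (0 : ℝ) ≤ h n := Nat.cast_nonneg _
    generalize (t n : ℝ) = a at *
    generalize (g n : ℝ) = b at *
    generalize (h n : ℝ) = c at *
    rw [← sub_nonneg]
    have : 0 ≤ (a + b) * (2 * a ^ 2 * c + a * (2 * b ^ 2 + 8 * b * c + 2 * c ^ 2)
        + (14 * b ^ 3 + 20 * b ^ 2 * c + 8 * b * c ^ 2 + c ^ 3)) := by positivity
    refine this.trans (le_of_eq ?_)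
    ring
  have hlog : ∀ n, Real.log (f (n + 1)) = 3 * Real.log (f n) + Real.log (1 - r n ^ 3) := by
    intro n
    have e : (f (n + 1) : ℝ) = (f n : ℝ) ^ 3 * (1 - r n ^ 3) := by
      rw [hrec]
      simp only [hr]
      have := (hfpos n).ne'
      field_simp
    rw [e, Real.log_mul (pow_pos (hfpos n) 3).ne' (hr3 n).ne', Real.log_pow]
    push_cast
    ring
  intro m _
  change _ ≤ -(1 / (3 : ℝ) ^ (m + 1)) * Real.log (1 - r m ^ 3)
  set u := Real.log (1 - r m ^ 3) with hu
  set L := Real.log (f m) with hL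
  have hlow : ∀ k, (3 : ℝ) ^ k * L + u * ((3 : ℝ) ^ k - 1) / 2 ≤ Real.log (f (m + k)) := by
    intro k
    induction k with
    | zero => simp [hL]
    | succ k ih =>
      have e : u ≤ Real.log (1 - r (m + k) ^ 3) := by
        apply Real.log_le_log (hr3 m)
        have := pow_le_pow_left₀ (hr0 (m + k)) (hanti (Nat.le_add_right m k)) 3
        linarith
      rw [← add_assoc, hlog, pow_succ]
      linarith
  have hz' := (tendsto_add_atTop_iff_nat m).2 hz
  have hy : Tendsto (fun k : ℕ => ((1 : ℝ) / 3) ^ k) atTop (nhds 0) :=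
    tendsto_pow_atTop_nhds_zero_of_lt_one (by norm_num) (by norm_num)
  have hlim : Tendsto (fun k : ℕ => ((2 * L + u) - u * ((1 : ℝ) / 3) ^ k) /
      (3 * ((3 : ℝ) ^ m + ((1 : ℝ) / 3) ^ k))) atTop
      (nhds (((2 * L + u) - u * 0) / (3 * ((3 : ℝ) ^ m + 0)))) := by
    apply Tendsto.div
    · exact tendsto_const_nhds.sub (hy.const_mul u)
    · exact (tendsto_const_nhds.add hy).const_mul 3
    · positivity
  have key := le_of_tendsto_of_tendsto' hlim hz' (by
    intro k
    have e : ((2 * L + u) - u * ((1 : ℝ) / 3) ^ k) / (3 * ((3 : ℝ) ^ m + ((1 : ℝ) / 3) ^ k))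
        = 2 * ((3 : ℝ) ^ k * L + u * ((3 : ℝ) ^ k - 1) / 2) / (3 * ((3 : ℝ) ^ (k + m) + 1)) := by
      rw [div_pow, one_pow, pow_add]
      have : (3 : ℝ) ^ k ≠ 0 := by positivity
      rw [div_eq_div_iff (by positivity) (by positivity)]
      field_simp
      ring
    rw [e, add_comm k m]
    have := hlow k
    gcongr)
  have e : ((2 * L + u) - u * 0) / (3 * ((3 : ℝ) ^ m + 0))
      = 2 / (3 : ℝ) ^ (m + 1) * L + 1 / (3 : ℝ) ^ (m + 1) * u := by
    rw [pow_succ]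
    field_simp
    ring
  rw [e] at key
  linarith
end

section
/- The limit z := lim_{n→∞} (5 ln F(n)) / (7·6^n + 8) exists, and for every integer m ≥ 1 it satisfies the strict bounds (5/(7·6^m)) · ln H(m) < z < (5/(7·6^m)) · ln F(m). -/
open Filter

/-- The asymptotic growth constant `z = lim 5 ln F(n) / (7·6^n + 8)` exists and satisfies
`(5/(7·6^m)) ln H(m) < z < (5/(7·6^m)) ln F(m)` for every `m ≥ 1`. -/
theorem sg23_growth_constant_bounds
    (T G H F : ℕ → ℕ)
    (hT0 : T 0 = 3) (hG0 : G 0 = 1) (hH0 : H 0 = 1)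
    (hT : ∀ n, T (n + 1) =
        142 * T n ^ 3 * G n ^ 3 + 18 * T n ^ 4 * G n * H n + 45 * T n ^ 3 * G n ^ 2 * H n
        + 153 * T n ^ 2 * G n ^ 4 + 36 * T n ^ 2 * G n ^ 3 * H n + 45 * T n * G n ^ 5
        + 9 * T n * G n ^ 4 * H n + 2 * G n ^ 6)
    (hG : ∀ n, G (n + 1) =
        77 * T n ^ 3 * G n ^ 2 * H n + 171 * T n ^ 2 * G n ^ 4 + 2 * T n ^ 4 * H n ^ 2
        + 22 * T n ^ 3 * G n * H n ^ 2 + 200 * T n ^ 2 * G n ^ 3 * H n + 195 * T n * G n ^ 5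
        + T n ^ 3 * H n ^ 3 + 50 * T n ^ 2 * G n ^ 2 * H n ^ 2 + 169 * T n * G n ^ 4 * H n
        + 56 * G n ^ 6 + 3 * T n ^ 2 * G n * H n ^ 3 + 42 * T n * G n ^ 3 * H n ^ 2
        + 46 * G n ^ 5 * H n + 3 * T n * G n ^ 2 * H n ^ 3 + 12 * G n ^ 4 * H n ^ 2
        + G n ^ 3 * H n ^ 3)
    (hH : ∀ n, H (n + 1) =
        60 * T n ^ 3 * G n * H n ^ 2 + 564 * T n ^ 2 * G n ^ 3 * H n + 468 * T n * G n ^ 5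
        + 14 * T n ^ 3 * H n ^ 3 + 552 * T n ^ 2 * G n ^ 2 * H n ^ 2
        + 1608 * T n * G n ^ 4 * H n + 468 * G n ^ 6 + 162 * T n ^ 2 * G n * H n ^ 3
        + 1404 * T n * G n ^ 3 * H n ^ 2 + 1236 * G n ^ 5 * H n + 15 * T n ^ 2 * H n ^ 4
        + 522 * T n * G n ^ 2 * H n ^ 3 + 1152 * G n ^ 4 * H n ^ 2 + 90 * T n * G n * H n ^ 4
        + 534 * G n ^ 3 * H n ^ 3 + 6 * T n * H n ^ 5 + 135 * G n ^ 2 * H n ^ 4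
        + 18 * G n * H n ^ 5 + H n ^ 6)
    (hF : ∀ n, F n = T n + 3 * G n + H n) :
    ∃ z : ℝ,
      Tendsto (fun n : ℕ => 5 * Real.log (F n) / (7 * (6 : ℝ) ^ n + 8)) atTop (nhds z) ∧
      ∀ m : ℕ, 1 ≤ m →
        5 / (7 * (6 : ℝ) ^ m) * Real.log (H m) < z ∧
        z < 5 / (7 * (6 : ℝ) ^ m) * Real.log (F m) := by
  have hpos : ∀ n, 0 < T n ∧ 0 < G n ∧ 0 < H n := by
    intro n
    induction n with
    | zero => simp [hT0, hG0, hH0]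
    | succ k ih =>
      obtain ⟨h1, h2, h3⟩ := ih
      rw [hT, hG, hH]
      exact ⟨by positivity, by positivity, by positivity⟩
  have hFpos : ∀ n, 0 < F n := by
    intro n
    have := hpos n
    rw [hF]; omega
  have hstepH : ∀ n, H n ^ 6 < H (n + 1) := by
    intro n
    obtain ⟨h1, h2, h3⟩ := hpos n
    rw [hH]
    exact Nat.lt_add_of_pos_left (by positivity)
  have hstepF : ∀ n, F (n + 1) < F n ^ 6 := by
    intro n
    obtain ⟨h1, h2, h3⟩ := hpos n
    rw [hF (n + 1), hF n, hT, hG, hH]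
    generalize T n = t at *
    generalize G n = g at *
    generalize H n = h at *
    zify at *
    rw [← sub_pos]
    ring_nf
    positivity
  have hlogH : ∀ n, Real.log (H n) / 6 ^ n < Real.log (H (n + 1)) / 6 ^ (n + 1) := by
    intro n
    have h1 : ((H n : ℝ)) ^ 6 < H (n + 1) := by exact_mod_cast hstepH n
    have h0 : (0 : ℝ) < H n := by exact_mod_cast (hpos n).2.2
    have h2 := Real.log_lt_log (by positivity) h1
    rw [Real.log_pow] at h2
    push_cast at h2
    rw [pow_succ, div_lt_div_iff₀ (by positivity) (by positivity)]
    have : (0 : ℝ) < 6 ^ n := by positivity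
    nlinarith
  have hlogF : ∀ n, Real.log (F (n + 1)) / 6 ^ (n + 1) < Real.log (F n) / 6 ^ n := by
    intro n
    have h1 : (F (n + 1) : ℝ) < (F n : ℝ) ^ 6 := by exact_mod_cast hstepF n
    have h0 : (0 : ℝ) < F (n + 1) := by exact_mod_cast hFpos (n + 1)
    have h2 := Real.log_lt_log h0 h1
    rw [Real.log_pow] at h2
    push_cast at h2
    rw [pow_succ, div_lt_div_iff₀ (by positivity) (by positivity)]
    have : (0 : ℝ) < 6 ^ n := by positivity
    nlinarith
  have hmonoH : StrictMono (fun n : ℕ => Real.log (H n) / (6 : ℝ) ^ n) :=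
    strictMono_nat_of_lt_succ hlogH
  have hantiF : StrictAnti (fun n : ℕ => Real.log (F n) / (6 : ℝ) ^ n) :=
    strictAnti_nat_of_succ_lt hlogF
  have hHF : ∀ n, Real.log (H n) / (6 : ℝ) ^ n ≤ Real.log (F n) / (6 : ℝ) ^ n := by
    intro n
    have h0 : (0 : ℝ) < H n := by exact_mod_cast (hpos n).2.2
    have h1 : (H n : ℝ) ≤ F n := by
      have : H n ≤ F n := by rw [hF]; omega
      exact_mod_cast this
    have := Real.log_le_log h0 h1
    gcongr
  have hbdd : BddBelow (Set.range (fun n : ℕ => Real.log (F n) / (6 : ℝ) ^ n)) := by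
    refine ⟨0, ?_⟩
    rintro _ ⟨n, rfl⟩
    have : (0 : ℝ) ≤ Real.log (F n) := Real.log_natCast_nonneg _
    positivity
  have hlim := tendsto_atTop_ciInf hantiF.antitone hbdd
  set L := ⨅ n : ℕ, Real.log (F n) / (6 : ℝ) ^ n with hL
  have hup : ∀ m : ℕ, L < Real.log (F m) / (6 : ℝ) ^ m := fun m =>
    lt_of_le_of_lt (ciInf_le hbdd (m + 1)) (hlogF m)
  have hlow : ∀ m : ℕ, Real.log (H m) / (6 : ℝ) ^ m < L := by
    intro m
    refine lt_of_lt_of_le (hlogH m) (ge_of_tendsto hlim ?_)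
    filter_upwards [eventually_ge_atTop (m + 1)] with n hn
    exact (hmonoH.monotone hn).trans (hHF n)
  refine ⟨5 / 7 * L, ?_, ?_⟩
  · have hpow : Tendsto (fun n : ℕ => ((1 / 6 : ℝ)) ^ n) atTop (nhds 0) :=
      tendsto_pow_atTop_nhds_zero_of_lt_one (by norm_num) (by norm_num)
    have h7 : Tendsto (fun n : ℕ => 5 / (7 + 8 * (1 / 6 : ℝ) ^ n)) atTop (nhds (5 / 7)) := by
      have := (tendsto_const_nhds (x := (5 : ℝ))).div
        ((hpow.const_mul 8).const_add 7) (by norm_num)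
      rw [mul_zero, add_zero] at this
      exact this
    refine (h7.mul hlim).congr ?_
    intro n
    have : (0 : ℝ) < 6 ^ n := by positivity
    rw [one_div, inv_pow]
    field_simp
  · intro m _
    have e : ∀ x : ℝ, 5 / (7 * (6 : ℝ) ^ m) * x = 5 / 7 * (x / 6 ^ m) := by
      intro x
      field_simp
    rw [e, e]
    exact ⟨mul_lt_mul_of_pos_left (hlow m) (by norm_num),
      mul_lt_mul_of_pos_left (hup m) (by norm_num)⟩
end

section
/- The asymptotic growth constant z := lim_{n→∞} (5 ln F(n)) / (7·6^n + 8) satisfies 1.31235755933 < z < 1.31235755934. -/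
open Filter

/-- Twelve-plus digit bounds for log 2, obtained from the Taylor series of `log (1 - x)`. -/
lemma sg23_log_two : (0.69314718055994 : ℝ) < Real.log 2 ∧ Real.log 2 < 0.69314718055995 := by
  have z := Real.abs_log_sub_add_sum_range_le (x := 1 / 2) (by norm_num [abs_of_pos]) 55
  rw [abs_of_pos (by norm_num : (0 : ℝ) < 1 / 2), show (1 - (1 : ℝ) / 2) = (2 : ℝ)⁻¹ by norm_num,
    Real.log_inv, abs_le] at z
  norm_num [Finset.sum_range_succ] at z
  constructor <;> norm_num <;> linarith [z.1, z.2]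

lemma sg23_log_low : (0.18099042564 : ℝ) < Real.log 1.1984037053 := by
  have z := Real.abs_log_sub_add_sum_range_le (x := -0.1984037053)
    (by rw [abs_lt]; norm_num) 20
  rw [abs_of_neg (by norm_num : (-0.1984037053 : ℝ) < 0),
    show (1 - (-0.1984037053) : ℝ) = 1.1984037053 by norm_num, abs_le] at z
  have z1 := z.1
  generalize Real.log 1.1984037053 = y at *
  norm_num [Finset.sum_range_succ] at z1
  norm_num
  linarith

lemma sg23_log_up : Real.log 0.7287616762 < (-0.31640851921 : ℝ) := by
  have z := Real.abs_log_sub_add_sum_range_le (x := 0.2712383238)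
    (by rw [abs_lt]; norm_num) 20
  rw [abs_of_pos (by norm_num : (0 : ℝ) < 0.2712383238),
    show (1 - 0.2712383238 : ℝ) = 0.7287616762 by norm_num, abs_le] at z
  have z1 := z.2
  generalize Real.log 0.7287616762 = y at *
  norm_num [Finset.sum_range_succ] at z1
  norm_num
  linarith

lemma sg23_log_le (k x : ℕ) (hx : 1 ≤ x) (h : 7287616762 * 2 ^ k ≥ 10 ^ 10 * x) :
    Real.log x ≤ (k : ℝ) * Real.log 2 + Real.log 0.7287616762 := by
  have h2 : (0 : ℝ) < x := by exact_mod_cast hx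
  have h3 : (10 : ℝ) ^ 10 * x ≤ 7287616762 * 2 ^ k := by exact_mod_cast h
  have h4 : (x : ℝ) ≤ 2 ^ k * 0.7287616762 := by
    norm_num at h3 ⊢
    linarith
  have h5 := Real.log_le_log h2 h4
  rwa [Real.log_mul (pow_ne_zero _ two_ne_zero) (by norm_num), Real.log_pow] at h5

lemma sg23_le_log (k x : ℕ) (h : 11984037053 * 2 ^ k ≤ 10 ^ 10 * x) :
    (k : ℝ) * Real.log 2 + Real.log 1.1984037053 ≤ Real.log x := by
  have h3 : 11984037053 * (2 : ℝ) ^ k ≤ (10 : ℝ) ^ 10 * x := by exact_mod_cast h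
  have hp : (0 : ℝ) < 2 ^ k := pow_pos two_pos _
  have h4 : 2 ^ k * 1.1984037053 ≤ (x : ℝ) := by
    norm_num at h3 ⊢
    linarith
  have h5 := Real.log_le_log (mul_pos hp (by norm_num)) h4
  rwa [Real.log_mul hp.ne' (by norm_num), Real.log_pow] at h5

set_option exponentiation.threshold 5000 in
lemma sg23_numeric (T G H : ℕ → ℕ)
    (hT0 : T 0 = 3) (hG0 : G 0 = 1) (hH0 : H 0 = 1)
    (hT : ∀ n, T (n + 1) =
        142 * T n ^ 3 * G n ^ 3 + 18 * T n ^ 4 * G n * H n + 45 * T n ^ 3 * G n ^ 2 * H n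
        + 153 * T n ^ 2 * G n ^ 4 + 36 * T n ^ 2 * G n ^ 3 * H n + 45 * T n * G n ^ 5
        + 9 * T n * G n ^ 4 * H n + 2 * G n ^ 6)
    (hG : ∀ n, G (n + 1) =
        77 * T n ^ 3 * G n ^ 2 * H n + 171 * T n ^ 2 * G n ^ 4 + 2 * T n ^ 4 * H n ^ 2
        + 22 * T n ^ 3 * G n * H n ^ 2 + 200 * T n ^ 2 * G n ^ 3 * H n + 195 * T n * G n ^ 5
        + T n ^ 3 * H n ^ 3 + 50 * T n ^ 2 * G n ^ 2 * H n ^ 2 + 169 * T n * G n ^ 4 * H n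
        + 56 * G n ^ 6 + 3 * T n ^ 2 * G n * H n ^ 3 + 42 * T n * G n ^ 3 * H n ^ 2
        + 46 * G n ^ 5 * H n + 3 * T n * G n ^ 2 * H n ^ 3 + 12 * G n ^ 4 * H n ^ 2
        + G n ^ 3 * H n ^ 3)
    (hH : ∀ n, H (n + 1) =
        60 * T n ^ 3 * G n * H n ^ 2 + 564 * T n ^ 2 * G n ^ 3 * H n + 468 * T n * G n ^ 5
        + 14 * T n ^ 3 * H n ^ 3 + 552 * T n ^ 2 * G n ^ 2 * H n ^ 2
        + 1608 * T n * G n ^ 4 * H n + 468 * G n ^ 6 + 162 * T n ^ 2 * G n * H n ^ 3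
        + 1404 * T n * G n ^ 3 * H n ^ 2 + 1236 * G n ^ 5 * H n + 15 * T n ^ 2 * H n ^ 4
        + 522 * T n * G n ^ 2 * H n ^ 3 + 1152 * G n ^ 4 * H n ^ 2 + 90 * T n * G n * H n ^ 4
        + 534 * G n ^ 3 * H n ^ 3 + 6 * T n * H n ^ 5 + 135 * G n ^ 2 * H n ^ 4
        + 18 * G n * H n ^ 5 + H n ^ 6) :
    7287616762 * 2 ^ 573 ≥ 10 ^ 10 * (T 3 + 3 * G 3 + H 3) ∧
      11984037053 * 2 ^ 3435 ≤ 10 ^ 10 * H 4 := by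
  have T1 := hT 0
  have G1 := hG 0
  have H1 := hH 0
  rw [hT0, hG0, hH0] at T1 G1 H1
  norm_num at T1 G1 H1
  have T2 := hT 1
  have G2 := hG 1
  have H2 := hH 1
  rw [T1, G1, H1] at T2 G2 H2
  norm_num at T2 G2 H2
  have T3 := hT 2
  have G3 := hG 2
  have H3 := hH 2
  rw [T2, G2, H2] at T3 G3 H3
  norm_num at T3 G3 H3
  have H4 := hH 3
  rw [T3, G3, H3] at H4
  norm_num at H4
  rw [T3, G3, H3, H4]
  constructor <;> norm_num

/-- The asymptotic growth constant `z_{SG_{2,3}} = lim 5 ln F(n) / (7·6^n + 8)` satisfies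
`1.31235755933 < z < 1.31235755934`. -/
theorem sg23_growth_constant_value
    (T G H F : ℕ → ℕ)
    (hT0 : T 0 = 3) (hG0 : G 0 = 1) (hH0 : H 0 = 1)
    (hT : ∀ n, T (n + 1) =
        142 * T n ^ 3 * G n ^ 3 + 18 * T n ^ 4 * G n * H n + 45 * T n ^ 3 * G n ^ 2 * H n
        + 153 * T n ^ 2 * G n ^ 4 + 36 * T n ^ 2 * G n ^ 3 * H n + 45 * T n * G n ^ 5
        + 9 * T n * G n ^ 4 * H n + 2 * G n ^ 6)
    (hG : ∀ n, G (n + 1) =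
        77 * T n ^ 3 * G n ^ 2 * H n + 171 * T n ^ 2 * G n ^ 4 + 2 * T n ^ 4 * H n ^ 2
        + 22 * T n ^ 3 * G n * H n ^ 2 + 200 * T n ^ 2 * G n ^ 3 * H n + 195 * T n * G n ^ 5
        + T n ^ 3 * H n ^ 3 + 50 * T n ^ 2 * G n ^ 2 * H n ^ 2 + 169 * T n * G n ^ 4 * H n
        + 56 * G n ^ 6 + 3 * T n ^ 2 * G n * H n ^ 3 + 42 * T n * G n ^ 3 * H n ^ 2
        + 46 * G n ^ 5 * H n + 3 * T n * G n ^ 2 * H n ^ 3 + 12 * G n ^ 4 * H n ^ 2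
        + G n ^ 3 * H n ^ 3)
    (hH : ∀ n, H (n + 1) =
        60 * T n ^ 3 * G n * H n ^ 2 + 564 * T n ^ 2 * G n ^ 3 * H n + 468 * T n * G n ^ 5
        + 14 * T n ^ 3 * H n ^ 3 + 552 * T n ^ 2 * G n ^ 2 * H n ^ 2
        + 1608 * T n * G n ^ 4 * H n + 468 * G n ^ 6 + 162 * T n ^ 2 * G n * H n ^ 3
        + 1404 * T n * G n ^ 3 * H n ^ 2 + 1236 * G n ^ 5 * H n + 15 * T n ^ 2 * H n ^ 4
        + 522 * T n * G n ^ 2 * H n ^ 3 + 1152 * G n ^ 4 * H n ^ 2 + 90 * T n * G n * H n ^ 4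
        + 534 * G n ^ 3 * H n ^ 3 + 6 * T n * H n ^ 5 + 135 * G n ^ 2 * H n ^ 4
        + 18 * G n * H n ^ 5 + H n ^ 6)
    (hF : ∀ n, F n = T n + 3 * G n + H n) :
    ∃ z : ℝ,
      Tendsto (fun n : ℕ => 5 * Real.log (F n) / (7 * (6 : ℝ) ^ n + 8)) atTop (nhds z) ∧
      1.31235755933 < z ∧ z < 1.31235755934 := by
  have hstep : ∀ n, F (n + 1) ≤ F n ^ 6 := by
    intro n
    rw [hF, hF, hT, hG, hH]
    generalize T n = t
    generalize G n = g
    generalize H n = h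
    refine le_trans (Nat.le_add_right _ (3 * t ^ 0 * g ^ 3 * h ^ 3
      + 27 * t ^ 0 * g ^ 4 * h ^ 2
      + 84 * t ^ 0 * g ^ 5 * h ^ 1
      + 91 * t ^ 0 * g ^ 6 * h ^ 0
      + 9 * t ^ 1 * g ^ 2 * h ^ 3
      + 90 * t ^ 1 * g ^ 3 * h ^ 2
      + 306 * t ^ 1 * g ^ 4 * h ^ 1
      + 360 * t ^ 1 * g ^ 5 * h ^ 0
      + 9 * t ^ 2 * g ^ 1 * h ^ 3
      + 108 * t ^ 2 * g ^ 2 * h ^ 2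
      + 420 * t ^ 2 * g ^ 3 * h ^ 1
      + 549 * t ^ 2 * g ^ 4 * h ^ 0
      + 3 * t ^ 3 * g ^ 0 * h ^ 3
      + 54 * t ^ 3 * g ^ 1 * h ^ 2
      + 264 * t ^ 3 * g ^ 2 * h ^ 1
      + 398 * t ^ 3 * g ^ 3 * h ^ 0
      + 9 * t ^ 4 * g ^ 0 * h ^ 2
      + 72 * t ^ 4 * g ^ 1 * h ^ 1
      + 135 * t ^ 4 * g ^ 2 * h ^ 0
      + 6 * t ^ 5 * g ^ 0 * h ^ 1
      + 18 * t ^ 5 * g ^ 1 * h ^ 0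
      + 1 * t ^ 6 * g ^ 0 * h ^ 0)) (le_of_eq ?_)
    ring
  have hHstep : ∀ n, H n ^ 6 ≤ H (n + 1) := by
    intro n
    rw [hH]
    exact Nat.le_add_left _ _
  have hHpos : ∀ n, 1 ≤ H n := by
    intro n
    induction n with
    | zero => omega
    | succ k ih => exact le_trans (Nat.one_le_pow _ _ ih) (hHstep k)
  have hHF : ∀ n, H n ≤ F n := by
    intro n
    rw [hF]
    omega
  have hFpos : ∀ n, 1 ≤ F n := fun n => le_trans (hHpos n) (hHF n)
  obtain ⟨num1, num2⟩ := sg23_numeric T G H hT0 hG0 hH0 hT hG hH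
  rw [← hF] at num1
  have ha3 : Real.log (F 3) ≤ 573 * Real.log 2 + Real.log 0.7287616762 :=
    sg23_log_le 573 (F 3) (hFpos 3) num1
  have hb4 : 3435 * Real.log 2 + Real.log 1.1984037053 ≤ Real.log (H 4) :=
    sg23_le_log 3435 (H 4) num2
  clear num1 num2
  set a : ℕ → ℝ := fun n => Real.log (F n) / 6 ^ n with ha
  set b : ℕ → ℝ := fun n => Real.log (H n) / 6 ^ n with hb
  have ha_anti : Antitone a := by
    refine antitone_nat_of_succ_le fun n => ?_
    have h1 : Real.log (F (n + 1)) ≤ 6 * Real.log (F n) := by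
      have h2 : (0 : ℝ) < F (n + 1) := by exact_mod_cast hFpos (n + 1)
      have h3 : (F (n + 1) : ℝ) ≤ (F n : ℝ) ^ 6 := by exact_mod_cast hstep n
      have := Real.log_le_log h2 h3
      rw [Real.log_pow] at this
      exact_mod_cast this
    simp only [ha]
    rw [div_le_div_iff₀ (by positivity) (by positivity), pow_succ]
    nlinarith [pow_pos (show (0 : ℝ) < 6 by norm_num) n]
  have hb_mono : Monotone b := by
    refine monotone_nat_of_le_succ fun n => ?_
    have h1 : 6 * Real.log (H n) ≤ Real.log (H (n + 1)) := by
      have h2 : (0 : ℝ) < (H n : ℝ) ^ 6 := by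
        have : (0 : ℝ) < H n := by exact_mod_cast hHpos n
        positivity
      have h3 : (H n : ℝ) ^ 6 ≤ (H (n + 1) : ℝ) := by exact_mod_cast hHstep n
      have := Real.log_le_log h2 h3
      rw [Real.log_pow] at this
      exact_mod_cast this
    simp only [hb]
    rw [div_le_div_iff₀ (by positivity) (by positivity), pow_succ]
    nlinarith [pow_pos (show (0 : ℝ) < 6 by norm_num) n]
  have hba : ∀ n, b n ≤ a n := by
    intro n
    have h2 : (0 : ℝ) < H n := by exact_mod_cast hHpos n
    have h3 : (H n : ℝ) ≤ F n := by exact_mod_cast hHF n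
    simp only [ha, hb]
    have := Real.log_le_log h2 h3
    gcongr
  have hba' : ∀ m n, b m ≤ a n := fun m n =>
    le_trans (hb_mono (le_max_left m n)) (le_trans (hba _) (ha_anti (le_max_right m n)))
  have hbdd : BddBelow (Set.range a) := by
    refine ⟨b 0, ?_⟩
    rintro _ ⟨n, rfl⟩
    exact hba' 0 n
  have hlim := tendsto_atTop_ciInf ha_anti hbdd
  set L : ℝ := ⨅ i, a i with hL
  have hLup : L ≤ a 3 := ciInf_le hbdd 3
  have hLlow : b 4 ≤ L := le_ciInf fun n => hba' 4 n
  obtain ⟨l1, l2⟩ := sg23_log_two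
  have l3 := sg23_log_low
  have l4 := sg23_log_up
  have hLup' : L ≤ Real.log (F 3) / 216 := by
    have : a 3 = Real.log (F 3) / 216 := by simp only [ha]; norm_num
    rwa [this] at hLup
  have hLlow' : Real.log (H 4) / 1296 ≤ L := by
    have : b 4 = Real.log (H 4) / 1296 := by simp only [hb]; norm_num
    rwa [this] at hLlow
  refine ⟨5 * L / (7 + 8 * 0), ?_, ?_, ?_⟩
  · have hpow : Tendsto (fun n : ℕ => (1 / 6 : ℝ) ^ n) atTop (nhds 0) :=
      tendsto_pow_atTop_nhds_zero_of_lt_one (by norm_num) (by norm_num)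
    have key := (hlim.const_mul 5).div ((hpow.const_mul 8).const_add 7) (by norm_num)
    refine key.congr fun n => ?_
    have h6 : (0 : ℝ) < 6 ^ n := by positivity
    simp only [ha, Pi.div_apply, div_pow, one_pow]
    field_simp
  · generalize Real.log 1.1984037053 = y1 at *
    generalize Real.log 0.7287616762 = y2 at *
    norm_num at *
    linarith
  · generalize Real.log 1.1984037053 = y1 at *
    generalize Real.log 0.7287616762 = y2 at *
    norm_num at *
    linarith
end

section
/- Let z := lim_{n→∞} (5 ln F(n)) / (7·6^n + 8). For every integer m ≥ 1, (5/(7·6^m)) · ln F(m) − z ≤ −(1/(7·6^m)) · ln(1 − 7·((T(m)+G(m))/F(m))^3). -/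
open Filter

lemma sg23_step_bound (t g h T' G' H' : ℝ) (ht : 0 < t) (hg : 0 < g) (hh : 0 < h)
    (hT : T' = 142 * t ^ 3 * g ^ 3 + 18 * t ^ 4 * g * h + 45 * t ^ 3 * g ^ 2 * h
        + 153 * t ^ 2 * g ^ 4 + 36 * t ^ 2 * g ^ 3 * h + 45 * t * g ^ 5
        + 9 * t * g ^ 4 * h + 2 * g ^ 6)
    (hG : G' = 77 * t ^ 3 * g ^ 2 * h + 171 * t ^ 2 * g ^ 4 + 2 * t ^ 4 * h ^ 2
        + 22 * t ^ 3 * g * h ^ 2 + 200 * t ^ 2 * g ^ 3 * h + 195 * t * g ^ 5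
        + t ^ 3 * h ^ 3 + 50 * t ^ 2 * g ^ 2 * h ^ 2 + 169 * t * g ^ 4 * h
        + 56 * g ^ 6 + 3 * t ^ 2 * g * h ^ 3 + 42 * t * g ^ 3 * h ^ 2
        + 46 * g ^ 5 * h + 3 * t * g ^ 2 * h ^ 3 + 12 * g ^ 4 * h ^ 2
        + g ^ 3 * h ^ 3)
    (hH : H' = 60 * t ^ 3 * g * h ^ 2 + 564 * t ^ 2 * g ^ 3 * h + 468 * t * g ^ 5
        + 14 * t ^ 3 * h ^ 3 + 552 * t ^ 2 * g ^ 2 * h ^ 2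
        + 1608 * t * g ^ 4 * h + 468 * g ^ 6 + 162 * t ^ 2 * g * h ^ 3
        + 1404 * t * g ^ 3 * h ^ 2 + 1236 * g ^ 5 * h + 15 * t ^ 2 * h ^ 4
        + 522 * t * g ^ 2 * h ^ 3 + 1152 * g ^ 4 * h ^ 2 + 90 * t * g * h ^ 4
        + 534 * g ^ 3 * h ^ 3 + 6 * t * h ^ 5 + 135 * g ^ 2 * h ^ 4
        + 18 * g * h ^ 5 + h ^ 6) :
    (t + 3 * g + h) ^ 6 * (1 - 7 * ((t + g) / (t + 3 * g + h)) ^ 3) ≤ T' + 3 * G' + H' ∧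
    (T' + G') / (T' + 3 * G' + H') ≤ (t + g) / (t + 3 * g + h) := by
  have hF : 0 < t + 3 * g + h := by positivity
  have hT' : 0 < T' := by rw [hT]; positivity
  have hG' : 0 < G' := by rw [hG]; positivity
  have hH' : 0 < H' := by rw [hH]; positivity
  constructor
  · have e : (t + 3 * g + h) ^ 6 * (1 - 7 * ((t + g) / (t + 3 * g + h)) ^ 3)
        = (t + 3 * g + h) ^ 6 - 7 * (t + 3 * g + h) ^ 3 * (t + g) ^ 3 := by
      field_simp
    rw [e, ← sub_nonneg, hT, hG, hH]
    ring_nf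
    positivity
  · rw [div_le_div_iff₀ (by positivity) hF, ← sub_nonneg, hT, hG, hH]
    ring_nf
    positivity

/-- The difference between the upper bound `(5/(7·6^m)) ln F(m)` and the growth constant `z`
is at most `-(1/(7·6^m)) ln (1 - 7 ((T(m)+G(m))/F(m))^3)`. -/
theorem sg23_upper_bound_gap
    (T G H F : ℕ → ℕ)
    (hT0 : T 0 = 3) (hG0 : G 0 = 1) (hH0 : H 0 = 1)
    (hT : ∀ n, T (n + 1) =
        142 * T n ^ 3 * G n ^ 3 + 18 * T n ^ 4 * G n * H n + 45 * T n ^ 3 * G n ^ 2 * H n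
        + 153 * T n ^ 2 * G n ^ 4 + 36 * T n ^ 2 * G n ^ 3 * H n + 45 * T n * G n ^ 5
        + 9 * T n * G n ^ 4 * H n + 2 * G n ^ 6)
    (hG : ∀ n, G (n + 1) =
        77 * T n ^ 3 * G n ^ 2 * H n + 171 * T n ^ 2 * G n ^ 4 + 2 * T n ^ 4 * H n ^ 2
        + 22 * T n ^ 3 * G n * H n ^ 2 + 200 * T n ^ 2 * G n ^ 3 * H n + 195 * T n * G n ^ 5
        + T n ^ 3 * H n ^ 3 + 50 * T n ^ 2 * G n ^ 2 * H n ^ 2 + 169 * T n * G n ^ 4 * H n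
        + 56 * G n ^ 6 + 3 * T n ^ 2 * G n * H n ^ 3 + 42 * T n * G n ^ 3 * H n ^ 2
        + 46 * G n ^ 5 * H n + 3 * T n * G n ^ 2 * H n ^ 3 + 12 * G n ^ 4 * H n ^ 2
        + G n ^ 3 * H n ^ 3)
    (hH : ∀ n, H (n + 1) =
        60 * T n ^ 3 * G n * H n ^ 2 + 564 * T n ^ 2 * G n ^ 3 * H n + 468 * T n * G n ^ 5
        + 14 * T n ^ 3 * H n ^ 3 + 552 * T n ^ 2 * G n ^ 2 * H n ^ 2
        + 1608 * T n * G n ^ 4 * H n + 468 * G n ^ 6 + 162 * T n ^ 2 * G n * H n ^ 3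
        + 1404 * T n * G n ^ 3 * H n ^ 2 + 1236 * G n ^ 5 * H n + 15 * T n ^ 2 * H n ^ 4
        + 522 * T n * G n ^ 2 * H n ^ 3 + 1152 * G n ^ 4 * H n ^ 2 + 90 * T n * G n * H n ^ 4
        + 534 * G n ^ 3 * H n ^ 3 + 6 * T n * H n ^ 5 + 135 * G n ^ 2 * H n ^ 4
        + 18 * G n * H n ^ 5 + H n ^ 6)
    (hF : ∀ n, F n = T n + 3 * G n + H n)
    (z : ℝ)
    (hz : Tendsto (fun n : ℕ => 5 * Real.log (F n) / (7 * (6 : ℝ) ^ n + 8)) atTop (nhds z)) :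
    ∀ m : ℕ, 1 ≤ m →
      5 / (7 * (6 : ℝ) ^ m) * Real.log (F m) - z ≤
        -(1 / (7 * (6 : ℝ) ^ m)) *
          Real.log (1 - 7 * (((T m : ℝ) + (G m : ℝ)) / (F m : ℝ)) ^ 3) := by
  have pos : ∀ n, 0 < T n ∧ 0 < G n ∧ 0 < H n := by
    intro n
    induction n with
    | zero => simp [hT0, hG0, hH0]
    | succ n ih =>
      obtain ⟨h1, h2, h3⟩ := ih
      refine ⟨?_, ?_, ?_⟩
      · rw [hT]; positivity
      · rw [hG]; positivity
      · rw [hH]; positivity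
  have hFr : ∀ n, (F n : ℝ) = T n + 3 * G n + H n := by
    intro n; rw [hF]; push_cast; ring
  have hFpos : ∀ n, (0 : ℝ) < F n := by
    intro n
    have := (pos n).1
    have h2 : 0 < F n := by rw [hF]; omega
    exact_mod_cast h2
  have step : ∀ n, (F n : ℝ) ^ 6 * (1 - 7 * (((T n : ℝ) + G n) / F n) ^ 3) ≤ F (n + 1) ∧
      ((T (n + 1) : ℝ) + G (n + 1)) / F (n + 1) ≤ ((T n : ℝ) + G n) / F n := by
    intro n
    obtain ⟨h1, h2, h3⟩ := pos n
    rw [hFr n, hFr (n + 1)]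
    exact sg23_step_bound (T n) (G n) (H n) _ _ _ (by exact_mod_cast h1) (by exact_mod_cast h2)
      (by exact_mod_cast h3) (by rw [hT]; push_cast; ring) (by rw [hG]; push_cast; ring)
      (by rw [hH]; push_cast; ring)
  have anti : Antitone (fun n => ((T n : ℝ) + G n) / F n) :=
    antitone_nat_of_succ_le fun n => (step n).2
  have p1 : ((T 1 : ℝ) + G 1) / F 1 = 16392 / 61905 := by
    have a := hT 0
    have b := hG 0
    have c := hH 0
    rw [hT0, hG0, hH0] at a b c
    norm_num at a b c
    rw [hFr, a, b, c]
    norm_num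
  intro m hm
  set p : ℝ := ((T m : ℝ) + G m) / F m with hp
  have hp0 : 0 ≤ p := by have := hFpos m; positivity
  have hp1 : p ≤ 16392 / 61905 := by rw [← p1]; exact anti hm
  have hq : 7 * p ^ 3 < 1 := by
    have : p ^ 3 ≤ (16392 / 61905) ^ 3 := by gcongr
    norm_num at this
    linarith
  have hp3 : 0 ≤ p ^ 3 := by positivity
  set r := Real.log (1 - 7 * p ^ 3) with hr
  have hr0 : r ≤ 0 := Real.log_nonpos (by linarith) (by linarith)
  have key : ∀ k : ℕ, 6 ^ k * (5 * Real.log (F m) + r) - r ≤ 5 * Real.log (F (m + k)) := by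
    intro k
    induction k with
    | zero => simp
    | succ k ih =>
      have h1 := (step (m + k)).1
      have h2 : ((T (m + k) : ℝ) + G (m + k)) / F (m + k) ≤ p := anti (Nat.le_add_right m k)
      have hpos := hFpos (m + k)
      have h3 : (((T (m + k) : ℝ) + G (m + k)) / F (m + k)) ^ 3 ≤ p ^ 3 := by gcongr
      have h4 : (F (m + k) : ℝ) ^ 6 * (1 - 7 * p ^ 3) ≤ F (m + k + 1) := by
        refine le_trans ?_ h1
        gcongr
      have h5 := Real.log_le_log (mul_pos (pow_pos hpos 6) (by linarith)) h4
      rw [Real.log_mul (pow_pos hpos 6).ne' (by linarith), Real.log_pow, ← hr] at h5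
      rw [← add_assoc, pow_succ]
      push_cast at h5
      linarith
  have lim1 : Tendsto (fun n : ℕ => 5 * Real.log (F n) / (7 * (6 : ℝ) ^ n + 8)
      * (1 + 8 / 7 * (1 / 6 : ℝ) ^ n)) atTop (nhds (z * (1 + 8 / 7 * 0))) :=
    hz.mul ((tendsto_const_nhds).add (tendsto_const_nhds.mul
      (tendsto_pow_atTop_nhds_zero_of_lt_one (by norm_num) (by norm_num))))
  have lim2 : (5 * Real.log (F m) + r) / (7 * 6 ^ m) ≤ z * (1 + 8 / 7 * 0) := by
    refine ge_of_tendsto lim1 ?_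
    filter_upwards [eventually_ge_atTop m] with n hn
    obtain ⟨k, rfl⟩ := Nat.exists_eq_add_of_le hn
    have hk := key k
    have e : 5 * Real.log (F (m + k)) / (7 * (6 : ℝ) ^ (m + k) + 8)
        * (1 + 8 / 7 * (1 / 6 : ℝ) ^ (m + k)) = 5 * Real.log (F (m + k)) / (7 * 6 ^ (m + k)) := by
      rw [one_div, inv_pow]
      have : (0 : ℝ) < 6 ^ (m + k) := by positivity
      generalize (6 : ℝ) ^ (m + k) = x at *
      field_simp
    rw [e, div_le_div_iff₀ (by positivity) (by positivity), pow_add]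
    have h6 : (0 : ℝ) < 6 ^ m := by positivity
    nlinarith
  have e2 : 5 / (7 * (6 : ℝ) ^ m) * Real.log (F m) - -(1 / (7 * (6 : ℝ) ^ m)) * r
      = (5 * Real.log (F m) + r) / (7 * 6 ^ m) := by
    ring
  linarith
end

section
/- Let f(n) = t(n) + 4g(n) + 3h(n) + 6p(n) + q(n), and write s(n) = t(n) + 2g(n) + h(n) + p(n) and u(n) = t(n) + g(n). Then for every natural number n, f(n+1) = f(n)^4 − 4 f(n) s(n)^3 − 3 s(n)^4 + 12 s(n)^2 u(n)^2 − 6 u(n)^4. -/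
/-- For the spanning-forest counting sequences on the three-dimensional Sierpinski gasket
`SG_3(n)`, with `s(n) = t(n)+2g(n)+h(n)+p(n)` and `u(n) = t(n)+g(n)`, the total count
satisfies `f(n+1) = f(n)^4 - 4 f(n) s(n)^3 - 3 s(n)^4 + 12 s(n)^2 u(n)^2 - 6 u(n)^4`. -/
theorem sg3_f_recursion
    (t g h p q f : ℕ → ℕ)
    (ht0 : t 0 = 16) (hg0 : g 0 = 3) (hh0 : h 0 = 1) (hp0 : p 0 = 1) (hq0 : q 0 = 1)
    (ht : ∀ n, t (n + 1) =
        72 * t n ^ 2 * p n * (g n + h n) + 56 * t n * (g n + h n) ^ 3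
        + 24 * t n ^ 2 * p n ^ 2
        + 12 * t n * p n * (11 * g n ^ 2 + 12 * g n * h n + h n ^ 2)
        + 12 * g n ^ 2 * (3 * g n ^ 2 + 8 * g n * h n + 6 * h n ^ 2)
        + 12 * t n * p n ^ 2 * (4 * g n + h n) + 48 * g n ^ 2 * p n * (g n + h n)
        + 4 * t n * p n ^ 3 + 12 * g n ^ 2 * p n ^ 2)
    (hg : ∀ n, g (n + 1) =
        6 * t n ^ 2 * q n * (g n + h n) + 24 * t n ^ 2 * p n ^ 2
        + 12 * t n * p n * (9 * g n ^ 2 + 16 * g n * h n + 7 * h n ^ 2)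
        + 4 * g n * (5 * g n ^ 3 + 18 * g n ^ 2 * h n + 24 * g n * h n ^ 2 + 14 * h n ^ 3)
        + 6 * t n ^ 2 * p n * q n + 6 * t n * p n ^ 2 * (21 * g n + 11 * h n)
        + 3 * t n * q n * (5 * g n ^ 2 + 6 * g n * h n + h n ^ 2)
        + 24 * g n * p n * (5 * g n ^ 2 + 9 * g n * h n + 4 * h n ^ 2)
        + 6 * t n * p n * q n * (3 * g n + h n) + 21 * t n * p n ^ 3
        + 6 * g n * p n ^ 2 * (19 * g n + 13 * h n)
        + 3 * g n * q n * (3 * g n ^ 2 + 4 * g n * h n + h n ^ 2)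
        + 3 * t n * p n ^ 2 * q n + 6 * g n * p n * q n * (2 * g n + h n)
        + 25 * g n * p n ^ 3 + 3 * g n * p n ^ 2 * q n)
    (hh : ∀ n, h (n + 1) =
        2 * t n ^ 2 * p n ^ 2
        + 12 * t n * p n * (g n ^ 2 + 4 * g n * h n + 3 * h n ^ 2)
        + 2 * (g n ^ 4 + 8 * g n ^ 3 * h n + 18 * g n ^ 2 * h n ^ 2
            + 16 * g n * h n ^ 3 + 11 * h n ^ 4)
        + 8 * t n * p n ^ 2 * (2 * g n + 3 * h n)
        + 8 * p n * (2 * g n ^ 3 + 9 * g n ^ 2 * h n + 9 * g n * h n ^ 2 + 2 * h n ^ 3)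
        + 4 * t n * p n ^ 3
        + 2 * p n ^ 2 * (10 * g n ^ 2 + 24 * g n * h n + 9 * h n ^ 2)
        + 8 * p n ^ 3 * (g n + h n) + p n ^ 4)
    (hp : ∀ n, p (n + 1) =
        6 * t n ^ 2 * p n * q n + 120 * t n * p n ^ 2 * (g n + h n)
        + 14 * t n * q n * (g n + h n) ^ 2 + 88 * p n * (g n + h n) ^ 3
        + 4 * t n * p n * q n * (13 * g n + 10 * h n) + 78 * t n * p n ^ 3
        + 6 * p n ^ 2 * (49 * g n ^ 2 + 78 * g n * h n + 29 * h n ^ 2)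
        + 2 * q n * (11 * g n ^ 3 + 26 * g n ^ 2 * h n + 19 * g n * h n ^ 2 + 4 * h n ^ 3)
        + t n ^ 2 * q n ^ 2 + 2 * t n * q n ^ 2 * (2 * g n + h n)
        + 26 * t n * p n ^ 2 * q n
        + 2 * p n * q n * (38 * g n ^ 2 + 50 * g n * h n + 15 * h n ^ 2)
        + 2 * p n ^ 3 * (115 * g n + 76 * h n) + 2 * t n * p n * q n ^ 2
        + q n ^ 2 * (4 * g n ^ 2 + 4 * g n * h n + h n ^ 2)
        + 2 * p n ^ 2 * q n * (31 * g n + 18 * h n) + 49 * p n ^ 4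
        + 2 * p n * q n ^ 2 * (2 * g n + h n) + 14 * p n ^ 3 * q n + p n ^ 2 * q n ^ 2)
    (hq : ∀ n, q (n + 1) =
        144 * t n * p n * q n * (g n + h n) + 208 * t n * p n ^ 3
        + 720 * p n ^ 2 * (g n + h n) ^ 2 + 56 * q n * (g n + h n) ^ 3
        + 24 * t n * q n ^ 2 * (g n + h n) + 252 * t n * p n ^ 2 * q n
        + 24 * p n * q n * (25 * g n ^ 2 + 44 * g n * h n + 19 * h n ^ 2)
        + 104 * p n ^ 3 * (17 * g n + 15 * h n) + 60 * t n * p n * q n ^ 2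
        + 24 * q n ^ 2 * (3 * g n ^ 2 + 5 * g n * h n + 2 * h n ^ 2)
        + 12 * p n ^ 2 * q n * (110 * g n + 89 * h n) + 972 * p n ^ 4
        + 4 * t n * q n ^ 3 + 12 * p n * q n ^ 2 * (22 * g n + 17 * h n)
        + 776 * p n ^ 3 * q n + 4 * q n ^ 3 * (4 * g n + 3 * h n)
        + 210 * p n ^ 2 * q n ^ 2 + 24 * p n * q n ^ 3 + q n ^ 4)
    (hf : ∀ n, f n = t n + 4 * g n + 3 * h n + 6 * p n + q n) :
    ∀ n, (f (n + 1) : ℤ) =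
      (f n : ℤ) ^ 4
      - 4 * (f n : ℤ) * ((t n : ℤ) + 2 * (g n : ℤ) + (h n : ℤ) + (p n : ℤ)) ^ 3
      - 3 * ((t n : ℤ) + 2 * (g n : ℤ) + (h n : ℤ) + (p n : ℤ)) ^ 4
      + 12 * ((t n : ℤ) + 2 * (g n : ℤ) + (h n : ℤ) + (p n : ℤ)) ^ 2
          * ((t n : ℤ) + (g n : ℤ)) ^ 2
      - 6 * ((t n : ℤ) + (g n : ℤ)) ^ 4 := by
  intro n
  have h1 := hf (n + 1)
  rw [ht, hg, hh, hp, hq] at h1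
  rw [h1, hf n]
  push_cast
  ring
end

section
/- The limit z := lim_{n→∞} ln f(n) / (2 (4^n + 1)) exists, and for every integer m ≥ 1 it satisfies the strict bounds (1/(2·4^m)) · ln q(m) < z < (1/(2·4^m)) · ln f(m). -/
open Filter

set_option maxHeartbeats 4000000 in
/-- The asymptotic growth constant `z = lim ln f(n) / (2 (4^n + 1))` exists and satisfies
`(1/(2·4^m)) ln q(m) < z < (1/(2·4^m)) ln f(m)` for every `m ≥ 1`. -/
theorem sg3_growth_constant_bounds
    (t g h p q f : ℕ → ℕ)
    (ht0 : t 0 = 16) (hg0 : g 0 = 3) (hh0 : h 0 = 1) (hp0 : p 0 = 1) (hq0 : q 0 = 1)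
    (ht : ∀ n, t (n + 1) =
        72 * t n ^ 2 * p n * (g n + h n) + 56 * t n * (g n + h n) ^ 3
        + 24 * t n ^ 2 * p n ^ 2
        + 12 * t n * p n * (11 * g n ^ 2 + 12 * g n * h n + h n ^ 2)
        + 12 * g n ^ 2 * (3 * g n ^ 2 + 8 * g n * h n + 6 * h n ^ 2)
        + 12 * t n * p n ^ 2 * (4 * g n + h n) + 48 * g n ^ 2 * p n * (g n + h n)
        + 4 * t n * p n ^ 3 + 12 * g n ^ 2 * p n ^ 2)
    (hg : ∀ n, g (n + 1) =
        6 * t n ^ 2 * q n * (g n + h n) + 24 * t n ^ 2 * p n ^ 2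
        + 12 * t n * p n * (9 * g n ^ 2 + 16 * g n * h n + 7 * h n ^ 2)
        + 4 * g n * (5 * g n ^ 3 + 18 * g n ^ 2 * h n + 24 * g n * h n ^ 2 + 14 * h n ^ 3)
        + 6 * t n ^ 2 * p n * q n + 6 * t n * p n ^ 2 * (21 * g n + 11 * h n)
        + 3 * t n * q n * (5 * g n ^ 2 + 6 * g n * h n + h n ^ 2)
        + 24 * g n * p n * (5 * g n ^ 2 + 9 * g n * h n + 4 * h n ^ 2)
        + 6 * t n * p n * q n * (3 * g n + h n) + 21 * t n * p n ^ 3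
        + 6 * g n * p n ^ 2 * (19 * g n + 13 * h n)
        + 3 * g n * q n * (3 * g n ^ 2 + 4 * g n * h n + h n ^ 2)
        + 3 * t n * p n ^ 2 * q n + 6 * g n * p n * q n * (2 * g n + h n)
        + 25 * g n * p n ^ 3 + 3 * g n * p n ^ 2 * q n)
    (hh : ∀ n, h (n + 1) =
        2 * t n ^ 2 * p n ^ 2
        + 12 * t n * p n * (g n ^ 2 + 4 * g n * h n + 3 * h n ^ 2)
        + 2 * (g n ^ 4 + 8 * g n ^ 3 * h n + 18 * g n ^ 2 * h n ^ 2
            + 16 * g n * h n ^ 3 + 11 * h n ^ 4)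
        + 8 * t n * p n ^ 2 * (2 * g n + 3 * h n)
        + 8 * p n * (2 * g n ^ 3 + 9 * g n ^ 2 * h n + 9 * g n * h n ^ 2 + 2 * h n ^ 3)
        + 4 * t n * p n ^ 3
        + 2 * p n ^ 2 * (10 * g n ^ 2 + 24 * g n * h n + 9 * h n ^ 2)
        + 8 * p n ^ 3 * (g n + h n) + p n ^ 4)
    (hp : ∀ n, p (n + 1) =
        6 * t n ^ 2 * p n * q n + 120 * t n * p n ^ 2 * (g n + h n)
        + 14 * t n * q n * (g n + h n) ^ 2 + 88 * p n * (g n + h n) ^ 3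
        + 4 * t n * p n * q n * (13 * g n + 10 * h n) + 78 * t n * p n ^ 3
        + 6 * p n ^ 2 * (49 * g n ^ 2 + 78 * g n * h n + 29 * h n ^ 2)
        + 2 * q n * (11 * g n ^ 3 + 26 * g n ^ 2 * h n + 19 * g n * h n ^ 2 + 4 * h n ^ 3)
        + t n ^ 2 * q n ^ 2 + 2 * t n * q n ^ 2 * (2 * g n + h n)
        + 26 * t n * p n ^ 2 * q n
        + 2 * p n * q n * (38 * g n ^ 2 + 50 * g n * h n + 15 * h n ^ 2)
        + 2 * p n ^ 3 * (115 * g n + 76 * h n) + 2 * t n * p n * q n ^ 2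
        + q n ^ 2 * (4 * g n ^ 2 + 4 * g n * h n + h n ^ 2)
        + 2 * p n ^ 2 * q n * (31 * g n + 18 * h n) + 49 * p n ^ 4
        + 2 * p n * q n ^ 2 * (2 * g n + h n) + 14 * p n ^ 3 * q n + p n ^ 2 * q n ^ 2)
    (hq : ∀ n, q (n + 1) =
        144 * t n * p n * q n * (g n + h n) + 208 * t n * p n ^ 3
        + 720 * p n ^ 2 * (g n + h n) ^ 2 + 56 * q n * (g n + h n) ^ 3
        + 24 * t n * q n ^ 2 * (g n + h n) + 252 * t n * p n ^ 2 * q n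
        + 24 * p n * q n * (25 * g n ^ 2 + 44 * g n * h n + 19 * h n ^ 2)
        + 104 * p n ^ 3 * (17 * g n + 15 * h n) + 60 * t n * p n * q n ^ 2
        + 24 * q n ^ 2 * (3 * g n ^ 2 + 5 * g n * h n + 2 * h n ^ 2)
        + 12 * p n ^ 2 * q n * (110 * g n + 89 * h n) + 972 * p n ^ 4
        + 4 * t n * q n ^ 3 + 12 * p n * q n ^ 2 * (22 * g n + 17 * h n)
        + 776 * p n ^ 3 * q n + 4 * q n ^ 3 * (4 * g n + 3 * h n)
        + 210 * p n ^ 2 * q n ^ 2 + 24 * p n * q n ^ 3 + q n ^ 4)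
    (hf : ∀ n, f n = t n + 4 * g n + 3 * h n + 6 * p n + q n) :
    ∃ z : ℝ,
      Tendsto (fun n : ℕ => Real.log (f n) / (2 * ((4 : ℝ) ^ n + 1))) atTop (nhds z) ∧
      ∀ m : ℕ, 1 ≤ m →
        1 / (2 * (4 : ℝ) ^ m) * Real.log (q m) < z ∧
        z < 1 / (2 * (4 : ℝ) ^ m) * Real.log (f m) := by
  have hpos : ∀ n, 0 < t n ∧ 0 < p n ∧ 0 < q n := by
    intro n
    induction n with
    | zero => rw [ht0, hp0, hq0]; norm_num
    | succ n ih =>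
      obtain ⟨h1, h2, h3⟩ := ih
      rw [ht, hp, hq]
      refine ⟨?_, ?_, ?_⟩ <;> positivity
  have hqlt : ∀ n, q n ^ 4 < q (n + 1) := by
    intro n
    obtain ⟨h1, h2, h3⟩ := hpos n
    rw [hq]
    apply Nat.lt_add_of_pos_left
    positivity
  have hflt : ∀ n, f (n + 1) < f n ^ 4 := by
    intro n
    obtain ⟨h1, h2, h3⟩ := hpos n
    have key : f n ^ 4 = f (n + 1) + (
        1 * t n ^ 4 + 16 * t n ^ 3 * g n + 12 * t n ^ 3 * h n + 24 * t n ^ 3 * p n + 4 * t n ^ 3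
        * q n + 96 * t n ^ 2 * g n ^ 2 + 144 * t n ^ 2 * g n * h n + 216 * t n ^ 2 * g n * p n +
        24 * t n ^ 2 * g n * q n + 54 * t n ^ 2 * h n ^ 2 + 144 * t n ^ 2 * h n * p n + 12 * t n
        ^ 2 * h n * q n + 90 * t n ^ 2 * p n ^ 2 + 12 * t n ^ 2 * p n * q n + 200 * t n * g n ^
        3 + 408 * t n * g n ^ 2 * h n + 552 * t n * g n ^ 2 * p n + 48 * t n * g n ^ 2 * q n +
        264 * t n * g n * h n ^ 2 + 672 * t n * g n * h n * p n + 48 * t n * g n * h n * q n +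
        408 * t n * g n * p n ^ 2 + 48 * t n * g n * p n * q n + 52 * t n * h n ^ 3 + 192 * t n
        * h n ^ 2 * p n + 12 * t n * h n ^ 2 * q n + 228 * t n * h n * p n ^ 2 + 24 * t n * h n
        * p n * q n + 88 * t n * p n ^ 3 + 12 * t n * p n ^ 2 * q n + 134 * g n ^ 4 + 336 * g n
        ^ 3 * h n + 432 * g n ^ 3 * p n + 32 * g n ^ 3 * q n + 300 * g n ^ 2 * h n ^ 2 + 744 * g
        n ^ 2 * h n * p n + 48 * g n ^ 2 * h n * q n + 444 * g n ^ 2 * p n ^ 2 + 48 * g n ^ 2 *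
        p n * q n + 112 * g n * h n ^ 3 + 408 * g n * h n ^ 2 * p n + 24 * g n * h n ^ 2 * q n +
        480 * g n * h n * p n ^ 2 + 48 * g n * h n * p n * q n + 184 * g n * p n ^ 3 + 24 * g n
        * p n ^ 2 * q n + 15 * h n ^ 4 + 72 * h n ^ 3 * p n + 4 * h n ^ 3 * q n + 126 * h n ^ 2
        * p n ^ 2 + 12 * h n ^ 2 * p n * q n + 96 * h n * p n ^ 3 + 12 * h n * p n ^ 2 * q n +
        27 * p n ^ 4 + 4 * p n ^ 3 * q n) := by
      rw [hf, hf, ht, hg, hh, hp, hq]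
      ring
    rw [key]
    apply Nat.lt_add_of_pos_right
    positivity
  have hqpos : ∀ n, (0 : ℝ) < q n := fun n => by exact_mod_cast (hpos n).2.2
  have hqf : ∀ n, q n ≤ f n := fun n => by rw [hf]; omega
  have hfpos : ∀ n, (0 : ℝ) < f n := fun n =>
    lt_of_lt_of_le (hqpos n) (by exact_mod_cast hqf n)
  -- the normalised logarithms
  set a : ℕ → ℝ := fun n => 1 / (2 * (4 : ℝ) ^ n) * Real.log (f n) with ha
  set b : ℕ → ℝ := fun n => 1 / (2 * (4 : ℝ) ^ n) * Real.log (q n) with hb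
  have scale : ∀ (n : ℕ) (x : ℝ),
      1 / (2 * (4 : ℝ) ^ n) * x = 1 / (2 * (4 : ℝ) ^ (n + 1)) * (4 * x) := by
    intro n x
    rw [pow_succ]
    field_simp
  have hbmono : StrictMono b := by
    refine strictMono_nat_of_lt_succ fun n => ?_
    simp only [hb]
    rw [scale n]
    refine mul_lt_mul_of_pos_left ?_ (by positivity)
    have h4 : (4 : ℝ) * Real.log (q n) = Real.log ((q n : ℝ) ^ 4) := by
      rw [Real.log_pow]; norm_num
    rw [h4]
    exact Real.log_lt_log (pow_pos (hqpos n) 4) (by exact_mod_cast hqlt n)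
  have haanti : StrictAnti a := by
    refine strictAnti_nat_of_succ_lt fun n => ?_
    simp only [ha]
    rw [scale n (Real.log (f n))]
    refine mul_lt_mul_of_pos_left ?_ (by positivity)
    have h4 : (4 : ℝ) * Real.log (f n) = Real.log ((f n : ℝ) ^ 4) := by
      rw [Real.log_pow]; norm_num
    rw [h4]
    exact Real.log_lt_log (hfpos _) (by exact_mod_cast hflt n)
  have hba : ∀ n, b n ≤ a n := by
    intro n
    refine mul_le_mul_of_nonneg_left ?_ (by positivity)
    exact Real.log_le_log (hqpos n) (by exact_mod_cast hqf n)
  have hbdd : BddBelow (Set.range a) := by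
    refine ⟨b 0, ?_⟩
    rintro _ ⟨n, rfl⟩
    exact (hbmono.monotone (Nat.zero_le n)).trans (hba n)
  have hlim : Tendsto a atTop (nhds (⨅ n, a n)) := tendsto_atTop_ciInf haanti.antitone hbdd
  refine ⟨⨅ n, a n, ?_, ?_⟩
  · have hr : Tendsto (fun n : ℕ => 1 - 1 / ((4 : ℝ) ^ n + 1)) atTop (nhds (1 - 0)) := by
      refine tendsto_const_nhds.sub ?_
      refine Tendsto.div_atTop tendsto_const_nhds ?_
      exact tendsto_atTop_add_const_right _ _ (tendsto_pow_atTop_atTop_of_one_lt (by norm_num))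
    have hm := hlim.mul hr
    rw [sub_zero, mul_one] at hm
    refine hm.congr fun n => ?_
    have h4 : (0 : ℝ) < 4 ^ n := by positivity
    simp only [ha]
    field_simp
    ring
  · intro m _
    constructor
    · refine lt_of_lt_of_le (hbmono (Nat.lt_succ_self m)) ?_
      refine ge_of_tendsto hlim ?_
      filter_upwards [eventually_ge_atTop (m + 1)] with n hn
      exact (hbmono.monotone hn).trans (hba n)
    · exact lt_of_le_of_lt (ciInf_le hbdd (m + 1)) (haanti (Nat.lt_succ_self m))
end
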